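/- Let c be a negative integer and suppose that c = L_n − 2^x·3^y = L_{n₁} − 2^{x₁}·3^{y₁} = L_{n₂} − 2^{x₂}·3^{y₂} for nonnegative integers with n > n₁ > n₂ and n₁ > 500. Then n − n₁ < 8·10^13 · (log n)². -/

import Mathlib

/-- The Lucas sequence: L 0 = 2, L 1 = 1, L (n+2) = L (n+1) + L n. -/
def lucas : ℕ → ℤ
  | 0 => 2
  | 1 => 1
  | n + 2 => lucas (n + 1) + lucas n

section

open QuadraticAlgebra

/-- A finite family of ring homomorphisms to a normed field in which every nonzero element has
product of absolute values at least one. -/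
def LiouvilleFamily {O K ι : Type} [CommRing O] [NormedField K] [Fintype ι]
    (σ : ι → O →+* K) : Prop :=
  ∀ x : O, x ≠ 0 → 1 ≤ ∏ i, ‖σ i x‖

/-- Extension of a ring homomorphism to a quadratic extension by a square root. -/
def sqrtExtend {O K : Type} [CommRing O] [Field K] {d : O} (σ : O →+* K) (r : K)
    (h : r ^ 2 = σ d) : QuadraticAlgebra O d 0 →+* K where
  toFun x := σ x.re + r * σ x.im
  map_one' := by simp [QuadraticAlgebra.re_one, QuadraticAlgebra.im_one]
  map_zero' := by simp
  map_add' x y := by simp; ring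
  map_mul' x y := by simp [← h]; ring

@[simp]
theorem sqrtExtend_apply {O K : Type} [CommRing O] [Field K] {d : O} (σ : O →+* K) (r : K)
    (h : r ^ 2 = σ d) (x : QuadraticAlgebra O d 0) :
    sqrtExtend σ r h x = σ x.re + r * σ x.im := rfl

/-- `d` is not a square, in the strong form needed in rings that are not known to be domains. -/
def StronglyNonsquare {O : Type} [CommRing O] (d : O) : Prop :=
  ∀ a b : O, a ^ 2 = d * b ^ 2 → a = 0 ∧ b = 0

/-- The two extensions of each member of a family to a quadratic extension. -/
def sqrtExtendFamily {O K ι : Type} [CommRing O] [Field K] {d : O} (σ : ι → O →+* K) (r : ι → K)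
    (h : ∀ i, r i ^ 2 = σ i d) : ι × Bool → QuadraticAlgebra O d 0 →+* K :=
  fun i => sqrtExtend (σ i.1) (if i.2 then r i.1 else -r i.1) (by
    split_ifs
    · exact h _
    · rw [neg_sq]; exact h _)

theorem LiouvilleFamily.sqrtExtend {O K ι : Type} [CommRing O] [NormedField K] [Fintype ι]
    {σ : ι → O →+* K} (hσ : LiouvilleFamily σ) {d : O} (hd : StronglyNonsquare d) (r : ι → K)
    (h : ∀ i, r i ^ 2 = σ i d) : LiouvilleFamily (sqrtExtendFamily σ r h) := by
  intro x hx
  have h0 : x.re ^ 2 - d * x.im ^ 2 ≠ 0 := by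
    intro h0
    obtain ⟨h1, h2⟩ := hd x.re x.im (sub_eq_zero.mp h0)
    exact hx (QuadraticAlgebra.ext h1 h2)
  refine (hσ _ h0).trans_eq ?_
  rw [Fintype.prod_prod_type]
  refine Finset.prod_congr rfl fun i _ => ?_
  rw [Fintype.prod_bool, ← norm_mul]
  congr 1
  simp only [sqrtExtendFamily, sqrtExtend_apply, map_sub, map_mul, map_pow, ← h i]
  simp only [if_true, Bool.false_eq_true, if_false]
  ring

theorem LiouvilleFamily.injective {O K ι : Type} [CommRing O] [NormedField K] [Fintype ι]
    {σ : ι → O →+* K} (hσ : LiouvilleFamily σ) (i : ι) {x : O} (hx : σ i x = 0) : x = 0 := by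
  by_contra h
  have := hσ x h
  rw [Finset.prod_eq_zero (Finset.mem_univ i) (by simp [hx])] at this
  norm_num at this

theorem stronglyNonsquare_of_dvd {O : Type} [CommRing O] {p : O} (hp : ∀ a, p ∣ a ^ 2 → p ∣ a)
    (hreg : ∀ x y : O, p * x = p * y → x = y) (hsep : ∀ x : O, (∀ n : ℕ, p ^ n ∣ x) → x = 0) :
    StronglyNonsquare p := by
  have key : ∀ n : ℕ, ∀ a b : O, a ^ 2 = p * b ^ 2 → p ^ n ∣ a ∧ p ^ n ∣ b := by
    intro n
    induction n with
    | zero => intro a b _; simp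
    | succ n ih =>
      intro a b hab
      obtain ⟨a', rfl⟩ := hp a ⟨_, hab⟩
      have h1 : p * a' ^ 2 = b ^ 2 := hreg _ _ (by rw [← hab]; ring)
      obtain ⟨b', rfl⟩ := hp b ⟨_, h1.symm⟩
      have h2 : a' ^ 2 = p * b' ^ 2 := hreg _ _ (by rw [h1]; ring)
      obtain ⟨h3, h4⟩ := ih a' b' h2
      rw [pow_succ']
      exact ⟨mul_dvd_mul_left p h3, mul_dvd_mul_left p h4⟩
  intro a b hab
  exact ⟨hsep a fun n => (key n a b hab).1, hsep b fun n => (key n a b hab).2⟩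

theorem QuadraticAlgebra.natCast_dvd_iff {O : Type} [CommRing O] {a b : O} (m : ℕ)
    (x : QuadraticAlgebra O a b) :
    (m : QuadraticAlgebra O a b) ∣ x ↔ (m : O) ∣ x.re ∧ (m : O) ∣ x.im := by
  rw [← QuadraticAlgebra.C_natCast, QuadraticAlgebra.C_eq_algebraMap,
    QuadraticAlgebra.algebraMap_dvd_iff]

/-- The ring of integers of `ℚ(√5)`. -/
abbrev GoldenInt : Type := QuadraticAlgebra ℤ 1 1

abbrev GoldenSqrtTwo : Type := QuadraticAlgebra GoldenInt ((2 : ℕ) : GoldenInt) 0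

abbrev GoldenSqrtTwoThree : Type := QuadraticAlgebra GoldenSqrtTwo ((3 : ℕ) : GoldenSqrtTwo) 0

/-- The golden ratio in `GoldenInt`. -/
abbrev gphi : GoldenInt := ⟨0, 1⟩

abbrev GoldenKummer : Type :=
  QuadraticAlgebra GoldenSqrtTwoThree
    (QuadraticAlgebra.C (QuadraticAlgebra.C gphi)) 0

theorem Int.eq_zero_of_forall_pow_dvd {p : ℕ} (hp : 2 ≤ p) {x : ℤ} (h : ∀ n : ℕ, (p : ℤ) ^ n ∣ x) :
    x = 0 := by
  by_contra hx
  have h1 := Int.le_of_dvd (abs_pos.mpr hx) ((dvd_abs _ _).mpr (h x.natAbs))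
  have h2 : x.natAbs < p ^ x.natAbs := Nat.lt_pow_self (by omega)
  rw [Int.abs_eq_natAbs] at h1
  exact absurd (lt_of_lt_of_le (by exact_mod_cast h2) h1) (lt_irrefl _)

theorem GoldenInt.natCast_pow_dvd {p : ℕ} (hp : 2 ≤ p) {x : GoldenInt}
    (h : ∀ n : ℕ, ((p : ℕ) : GoldenInt) ^ n ∣ x) : x = 0 := by
  have h' : ∀ n : ℕ, ((p ^ n : ℕ) : GoldenInt) ∣ x := fun n => by rw [Nat.cast_pow]; exact h n
  have h2 := fun n => (QuadraticAlgebra.natCast_dvd_iff _ _).mp (h' n)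
  simp only [Nat.cast_pow] at h2
  exact QuadraticAlgebra.ext (Int.eq_zero_of_forall_pow_dvd hp fun n => (h2 n).1)
    (Int.eq_zero_of_forall_pow_dvd hp fun n => (h2 n).2)

theorem GoldenInt.natCast_mul_cancel {p : ℕ} (hp : 2 ≤ p) {x y : GoldenInt}
    (h : ((p : ℕ) : GoldenInt) * x = ((p : ℕ) : GoldenInt) * y) : x = y := by
  have h1 := congrArg QuadraticAlgebra.re h
  have h2 := congrArg QuadraticAlgebra.im h
  simp at h1 h2
  have : p ≠ 0 := by omega
  simp [this] at h1 h2
  exact QuadraticAlgebra.ext h1 h2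

theorem stronglyNonsquare_two : StronglyNonsquare ((2 : ℕ) : GoldenInt) := by
  refine stronglyNonsquare_of_dvd (fun a h => ?_)
    (fun x y h => GoldenInt.natCast_mul_cancel le_rfl h)
    (fun x h => GoldenInt.natCast_pow_dvd le_rfl h)
  rw [QuadraticAlgebra.natCast_dvd_iff] at h ⊢
  obtain ⟨h1, h2⟩ := h
  rw [← ZMod.intCast_zmod_eq_zero_iff_dvd] at h1 h2
  simp [pow_two] at h1 h2
  have key : ∀ u v : ZMod 2, u * u + v * v = 0 → u * v + v * u + v * v = 0 → u = 0 ∧ v = 0 := by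
    decide
  have := key a.re a.im (by exact_mod_cast h1) (by exact_mod_cast h2)
  constructor
  · exact (ZMod.intCast_zmod_eq_zero_iff_dvd _ 2).mp this.1
  · exact (ZMod.intCast_zmod_eq_zero_iff_dvd _ 2).mp this.2

theorem stronglyNonsquare_three : StronglyNonsquare ((3 : ℕ) : GoldenSqrtTwo) := by
  refine stronglyNonsquare_of_dvd (fun a h => ?_) (fun x y h => ?_) (fun x h => ?_)
  · simp only [QuadraticAlgebra.natCast_dvd_iff] at h ⊢
    simp only [← ZMod.intCast_zmod_eq_zero_iff_dvd] at h ⊢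
    simp [pow_two] at h
    have key : ∀ u v w x : ZMod 3, u * u + v * v + 2 * (w * w + x * x) = 0 ∧
        u * v + v * u + v * v + 2 * (w * x + x * w + x * x) = 0 ∧
        u * w + v * x + (w * u + x * v) = 0 ∧
        u * x + v * w + v * x + (w * v + x * u + x * v) = 0 →
        (u = 0 ∧ v = 0) ∧ w = 0 ∧ x = 0 := by
      decide
    obtain ⟨⟨h1, h2⟩, h3, h4⟩ := h
    refine key _ _ _ _ ⟨?_, ?_, ?_, ?_⟩
    · linear_combination h1
    · linear_combination h2
    · linear_combination h3
    · linear_combination h4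
  · have h1 := congrArg QuadraticAlgebra.re h
    have h2 := congrArg QuadraticAlgebra.im h
    simp only [QuadraticAlgebra.re_mul, QuadraticAlgebra.im_mul, QuadraticAlgebra.re_natCast,
      QuadraticAlgebra.im_natCast, zero_mul, mul_zero, add_zero] at h1 h2
    exact QuadraticAlgebra.ext (GoldenInt.natCast_mul_cancel (by norm_num) h1)
      (GoldenInt.natCast_mul_cancel (by norm_num) h2)
  · have h' : ∀ n : ℕ, ((3 ^ n : ℕ) : GoldenSqrtTwo) ∣ x := fun n => by
      rw [Nat.cast_pow]; exact h n
    have h2 := fun n => (QuadraticAlgebra.natCast_dvd_iff _ _).mp (h' n)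
    simp only [Nat.cast_pow] at h2
    have h3 : 2 ≤ 3 := by norm_num
    exact QuadraticAlgebra.ext (GoldenInt.natCast_pow_dvd h3 fun n => (h2 n).1)
      (GoldenInt.natCast_pow_dvd h3 fun n => (h2 n).2)

open Real in
/-- The real embeddings of `GoldenInt`. -/
noncomputable def goldenEmbedding (i : Bool) : GoldenInt →+* ℝ where
  toFun x := x.re + (if i then goldenRatio else goldenConj) * x.im
  map_one' := by simp [QuadraticAlgebra.re_one, QuadraticAlgebra.im_one]
  map_zero' := by simp
  map_add' x y := by cases i <;> simp <;> ring
  map_mul' x y := by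
    cases i <;> simp
    · linear_combination (-(x.im * y.im : ℝ)) * goldenConj_sq
    · linear_combination (-(x.im * y.im : ℝ)) * goldenRatio_sq

theorem goldenEmbedding_apply (i : Bool) (x : GoldenInt) :
    goldenEmbedding i x = x.re + (if i then Real.goldenRatio else Real.goldenConj) * x.im := rfl

theorem liouvilleFamily_golden : LiouvilleFamily goldenEmbedding := by
  intro x hx
  have h : goldenEmbedding true x * goldenEmbedding false x =
      ((x.re ^ 2 + x.re * x.im - x.im ^ 2 : ℤ) : ℝ) := by
    simp only [goldenEmbedding_apply, if_true, Bool.false_eq_true, if_false]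
    push_cast
    linear_combination (x.re * x.im : ℝ) * Real.goldenRatio_add_goldenConj +
      (x.im ^ 2 : ℝ) * Real.goldenRatio_mul_goldenConj
  rw [Fintype.prod_bool, ← norm_mul, h, Real.norm_eq_abs, ← Int.cast_abs]
  have h0 : x.re ^ 2 + x.re * x.im - x.im ^ 2 ≠ 0 := by
    intro h0
    rw [h0, Int.cast_zero, mul_eq_zero] at h
    have key : ∀ z : ℝ, Irrational z → (x.re : ℝ) + z * x.im = 0 → False := by
      intro z hz h1
      by_cases h2 : x.im = 0
      · refine hx (QuadraticAlgebra.ext ?_ h2)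
        rw [h2] at h1
        simpa using h1
      · refine (hz.mul_intCast h2).ne_int (-x.re) ?_
        push_cast
        linarith
    rcases h with h | h
    · exact key _ Real.goldenRatio_irrational h
    · exact key _ Real.goldenConj_irrational h
  exact_mod_cast Int.one_le_abs h0

noncomputable abbrev goldenSqrtTwoEmbedding : Bool × Bool → GoldenSqrtTwo →+* ℝ :=
  sqrtExtendFamily goldenEmbedding (fun _ => √2) fun i => by
    rw [map_natCast]; norm_num

theorem liouvilleFamily_goldenSqrtTwo : LiouvilleFamily goldenSqrtTwoEmbedding :=
  liouvilleFamily_golden.sqrtExtend stronglyNonsquare_two _ _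

noncomputable abbrev goldenSqrtTwoThreeEmbedding :
    (Bool × Bool) × Bool → GoldenSqrtTwoThree →+* ℝ :=
  sqrtExtendFamily goldenSqrtTwoEmbedding (fun _ => √3) fun i => by
    rw [map_natCast]; norm_num

theorem liouvilleFamily_goldenSqrtTwoThree : LiouvilleFamily goldenSqrtTwoThreeEmbedding :=
  liouvilleFamily_goldenSqrtTwo.sqrtExtend stronglyNonsquare_three _ _

theorem goldenSqrtTwoThreeEmbedding_phi (i : (Bool × Bool) × Bool) :
    goldenSqrtTwoThreeEmbedding i (QuadraticAlgebra.C (QuadraticAlgebra.C gphi)) =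
      if i.1.1 then Real.goldenRatio else Real.goldenConj := by
  simp [goldenSqrtTwoThreeEmbedding, goldenSqrtTwoEmbedding, sqrtExtendFamily,
    goldenEmbedding_apply]

theorem stronglyNonsquare_phi : StronglyNonsquare
    (QuadraticAlgebra.C (QuadraticAlgebra.C gphi) : GoldenSqrtTwoThree) := by
  intro a b h
  have h1 : goldenSqrtTwoThreeEmbedding ((false, true), true) a ^ 2 = Real.goldenConj *
      goldenSqrtTwoThreeEmbedding ((false, true), true) b ^ 2 := by
    have h3 := goldenSqrtTwoThreeEmbedding_phi ((false, true), true)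
    simp only [Bool.false_eq_true, if_false] at h3
    rw [← h3, ← map_pow, ← map_pow, ← map_mul, h]
  have h2 := Real.goldenConj_neg
  have key : ∀ u v w : ℝ, u ^ 2 = w * v ^ 2 → w < 0 → u = 0 ∧ v = 0 := by
    intro u v w h h2
    have hu : u ^ 2 = 0 := le_antisymm
      (h ▸ mul_nonpos_of_nonpos_of_nonneg h2.le (sq_nonneg v)) (sq_nonneg u)
    have hv : v ^ 2 = 0 := (mul_eq_zero.mp (h ▸ hu)).resolve_left h2.ne
    exact ⟨sq_eq_zero_iff.mp hu, sq_eq_zero_iff.mp hv⟩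
  obtain ⟨ha, hb⟩ := key _ _ _ h1 h2
  exact ⟨liouvilleFamily_goldenSqrtTwoThree.injective ((false, true), true) ha,
    liouvilleFamily_goldenSqrtTwoThree.injective ((false, true), true) hb⟩

theorem exists_goldenKummerEmbedding : ∃ r : (Bool × Bool) × Bool → ℂ,
    r ((true, true), true) = (√Real.goldenRatio : ℝ) ∧
    ∀ i, r i ^ 2 = (Complex.ofRealHom.comp (goldenSqrtTwoThreeEmbedding i))
      (QuadraticAlgebra.C (QuadraticAlgebra.C gphi)) := by
  refine ⟨fun i => if i.1.1 then (√Real.goldenRatio : ℝ) else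
    Complex.I * (√(-Real.goldenConj) : ℝ), by simp, fun i => ?_⟩
  rw [RingHom.comp_apply, goldenSqrtTwoThreeEmbedding_phi]
  dsimp only
  split_ifs
  · rw [← Complex.ofReal_pow, Real.sq_sqrt Real.goldenRatio_pos.le]; rfl
  · rw [mul_pow, ← Complex.ofReal_pow, Real.sq_sqrt (by linarith [Real.goldenConj_neg])]
    simp

theorem LiouvilleFamily.ofReal {O ι : Type} [CommRing O] [Fintype ι]
    {σ : ι → O →+* ℝ} (hσ : LiouvilleFamily σ) :
    LiouvilleFamily fun i => Complex.ofRealHom.comp (σ i) := by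
  intro x hx
  simpa using hσ x hx

/-- The square roots of `2`, `3` and the golden ratio in `GoldenKummer`. -/
def kummerRoot : Fin 3 → GoldenKummer :=
  ![QuadraticAlgebra.C (QuadraticAlgebra.C ⟨0, 1⟩), QuadraticAlgebra.C ⟨0, 1⟩, ⟨0, 1⟩]

/-- The real square roots of `2`, `3` and the golden ratio. -/
noncomputable def realRoot : Fin 3 → ℝ := ![√2, √3, √Real.goldenRatio]

theorem norm_map_kummerRoot_le (f : GoldenKummer →+* ℂ) (i : Fin 3) :
    ‖f (kummerRoot i)‖ ≤ realRoot i := by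
  have key : ∀ m : ℕ, ∀ x : GoldenKummer, x * x = (m : ℕ) → ‖f x‖ ≤ √m := by
    intro m x hx
    have := congrArg (fun y => ‖f y‖) hx
    simp only [map_mul, norm_mul, map_natCast, Complex.norm_natCast] at this
    rw [← this, Real.sqrt_mul_self (norm_nonneg _)]
  fin_cases i
  · refine key 2 _ ?_
    ext <;> simp [kummerRoot]
  · refine key 3 _ ?_
    ext <;> simp [kummerRoot]
  · have h1 : kummerRoot 2 * kummerRoot 2 =
        QuadraticAlgebra.C (QuadraticAlgebra.C (QuadraticAlgebra.C gphi)) := by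
      ext <;> simp [kummerRoot]
    set p : GoldenKummer :=
      QuadraticAlgebra.C (QuadraticAlgebra.C (QuadraticAlgebra.C gphi)) with hp
    have h2 : p * p = p + 1 := by
      ext <;> simp [hp, QuadraticAlgebra.re_one, QuadraticAlgebra.im_one]
    have h3 : ‖f p‖ ≤ Real.goldenRatio := by
      have h4 := congrArg f h2
      rw [map_mul, map_add, map_one] at h4
      have h5 : ‖f p‖ * ‖f p‖ ≤ ‖f p‖ + 1 := by
        rw [← norm_mul, h4]
        exact (norm_add_le _ _).trans (by simp)
      have := Real.goldenRatio_sq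
      have := Real.one_lt_goldenRatio
      nlinarith [norm_nonneg (f p)]
    have h6 := congrArg (fun y => ‖f y‖) h1
    simp only [map_mul, norm_mul] at h6
    show ‖f (kummerRoot 2)‖ ≤ √Real.goldenRatio
    refine Real.le_sqrt_of_sq_le ?_
    rw [pow_two, h6]; exact h3

/-- Liouville's inequality in `ℚ(√2, √3, √φ)`, with bounded conjugates. -/
theorem goldenKummer_sum_eq_zero {α : Type*} (S : Finset α) (c : α → ℤ) (m : α → Fin 3 → ℕ) (M : ℝ)
    (hM : ∑ a ∈ S, |(c a : ℝ)| * ∏ i, realRoot i ^ m a i ≤ M)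
    (hV : |∑ a ∈ S, c a * ∏ i, realRoot i ^ m a i| * M ^ 15 < 1) :
    ∑ a ∈ S, (c a : GoldenKummer) * ∏ i, kummerRoot i ^ m a i = 0 := by
  by_contra hne
  obtain ⟨r, hr1, hr⟩ := exists_goldenKummerEmbedding
  have hL := liouvilleFamily_goldenSqrtTwoThree.ofReal.sqrtExtend stronglyNonsquare_phi r hr
  set σ := sqrtExtendFamily (fun i => Complex.ofRealHom.comp (goldenSqrtTwoThreeEmbedding i)) r hr
    with hσ
  have h1 := hL _ hne
  rw [← Finset.mul_prod_erase _ _ (Finset.mem_univ (((true, true), true), true))] at h1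
  have hroot : ∀ i, σ (((true, true), true), true) (kummerRoot i) = (realRoot i : ℝ) := by
    intro i
    fin_cases i <;>
    simp [hσ, sqrtExtendFamily, kummerRoot, realRoot, hr1, goldenSqrtTwoThreeEmbedding,
      goldenSqrtTwoEmbedding, goldenEmbedding_apply]
  have h2 : ‖σ (((true, true), true), true)
      (∑ a ∈ S, (c a : GoldenKummer) * ∏ i, kummerRoot i ^ m a i)‖ =
      |∑ a ∈ S, c a * ∏ i, realRoot i ^ m a i| := by
    rw [← Real.norm_eq_abs, ← Complex.norm_real]
    congr 1
    simp [map_sum, map_prod, hroot]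
  have h3 : ∀ j, ‖σ j (∑ a ∈ S, (c a : GoldenKummer) * ∏ i, kummerRoot i ^ m a i)‖ ≤ M := by
    intro j
    refine le_trans ?_ hM
    rw [map_sum]
    refine (norm_sum_le _ _).trans (Finset.sum_le_sum fun a _ => ?_)
    rw [map_mul, norm_mul, map_intCast, Complex.norm_intCast, map_prod, norm_prod]
    gcongr with i
    rw [map_pow, norm_pow]
    exact pow_le_pow_left₀ (norm_nonneg _) (norm_map_kummerRoot_le _ _) _
  have h4 : ∏ j ∈ Finset.univ.erase (((true, true), true), true),
      ‖σ j (∑ a ∈ S, (c a : GoldenKummer) * ∏ i, kummerRoot i ^ m a i)‖ ≤ M ^ 15 := by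
    refine (Finset.prod_le_prod (fun _ _ => norm_nonneg _) fun j _ => h3 j).trans_eq ?_
    rw [Finset.prod_const, Finset.card_erase_of_mem (Finset.mem_univ _)]
    simp
  rw [h2] at h1
  have := mul_le_mul_of_nonneg_left h4
    (abs_nonneg (∑ a ∈ S, c a * ∏ i, realRoot i ^ m a i))
  linarith

theorem QuadraticAlgebra.omega_pow {O : Type} [CommRing O] (d : O) (m : ℕ) :
    (⟨0, 1⟩ : QuadraticAlgebra O d 0) ^ m =
      ⟨if m % 2 = 0 then d ^ (m / 2) else 0, if m % 2 = 1 then d ^ (m / 2) else 0⟩ := by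
  have h2 : ∀ k, (⟨0, 1⟩ : QuadraticAlgebra O d 0) ^ (2 * k) = ⟨d ^ k, 0⟩ := by
    intro k
    have : (⟨0, 1⟩ : QuadraticAlgebra O d 0) ^ 2 = QuadraticAlgebra.C d := by
      rw [pow_two]; ext <;> simp
    rw [pow_mul, this, ← QuadraticAlgebra.C_pow]; rfl
  rcases Nat.even_or_odd' m with ⟨k, rfl | rfl⟩
  · rw [h2]; simp
  · rw [pow_succ, h2]
    have h3 : (2 * k + 1) / 2 = k := by omega
    ext <;> simp [h3, Nat.add_mod]

/-- Comparison of coordinates in a quadratic extension. -/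
theorem QuadraticAlgebra.sum_filter_eq_zero {α O : Type} [CommRing O] {d : O} (S : Finset α)
    (x : α → O) (m : α → ℕ)
    (h : ∑ a ∈ S, QuadraticAlgebra.C (x a) * (⟨0, 1⟩ : QuadraticAlgebra O d 0) ^ m a = 0)
    {e : ℕ} (he : e < 2) : ∑ a ∈ S with m a % 2 = e, x a * d ^ (m a / 2) = 0 := by
  rw [Finset.sum_filter]
  interval_cases e
  · have := congrArg (QuadraticAlgebra.reₗ (a := d) (b := 0)) h
    rw [map_sum, map_zero] at this
    refine Eq.trans (Finset.sum_congr rfl fun a _ => ?_) this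
    rw [QuadraticAlgebra.omega_pow]
    simp [QuadraticAlgebra.reₗ]
  · have := congrArg (QuadraticAlgebra.imₗ (a := d) (b := 0)) h
    rw [map_sum, map_zero] at this
    refine Eq.trans (Finset.sum_congr rfl fun a _ => ?_) this
    rw [QuadraticAlgebra.omega_pow]
    simp [QuadraticAlgebra.imₗ]

theorem goldenKummer_component {α : Type} (S : Finset α) (c : α → ℤ) (m : α → Fin 3 → ℕ)
    (h : ∑ a ∈ S, (c a : GoldenKummer) * ∏ i, kummerRoot i ^ m a i = 0)
    {e : Fin 3 → ℕ} (he : ∀ i, e i < 2) :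
    ∑ a ∈ S with ∀ i, m a i % 2 = e i, c a * ∏ i, realRoot i ^ m a i = 0 := by
  have h3 := QuadraticAlgebra.sum_filter_eq_zero (O := GoldenSqrtTwoThree) S
    (fun a => (c a : GoldenSqrtTwoThree) * QuadraticAlgebra.C ⟨0, 1⟩ ^ m a 0 * ⟨0, 1⟩ ^ m a 1)
    (fun a => m a 2) (by
      refine Eq.trans (Finset.sum_congr rfl fun a _ => ?_) h
      simp only [QuadraticAlgebra.C_mul, QuadraticAlgebra.C_pow, QuadraticAlgebra.C_intCast,
        Fin.prod_univ_three, kummerRoot, Matrix.cons_val]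
      ring) (he 2)
  have h2 := QuadraticAlgebra.sum_filter_eq_zero (O := GoldenSqrtTwo) _
    (fun a => (c a : GoldenSqrtTwo) * ⟨0, 1⟩ ^ m a 0 * QuadraticAlgebra.C gphi ^ (m a 2 / 2))
    (fun a => m a 1) (by
      refine Eq.trans (Finset.sum_congr rfl fun a _ => ?_) h3
      simp only [QuadraticAlgebra.C_mul, QuadraticAlgebra.C_pow, QuadraticAlgebra.C_intCast]
      ring) (he 1)
  have h1 := QuadraticAlgebra.sum_filter_eq_zero (O := GoldenInt) _
    (fun a => (c a : GoldenInt) * gphi ^ (m a 2 / 2) * (3 : ℕ) ^ (m a 1 / 2))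
    (fun a => m a 0) (by
      refine Eq.trans (Finset.sum_congr rfl fun a _ => ?_) h2
      simp only [QuadraticAlgebra.C_mul, QuadraticAlgebra.C_pow, QuadraticAlgebra.C_intCast,
        QuadraticAlgebra.C_natCast]
      ring) (he 0)
  have h0 := congrArg (fun y => (∏ i, realRoot i ^ e i) * goldenEmbedding true y) h1
  simp only [map_zero, mul_zero, map_sum, map_mul, map_pow, map_intCast, map_natCast,
    Finset.filter_filter, Finset.mul_sum] at h0
  rw [← h0]
  have hphi : goldenEmbedding true gphi = Real.goldenRatio := by simp [goldenEmbedding_apply]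
  refine Finset.sum_congr ?_ fun a ha => ?_
  · ext a
    simp only [Finset.mem_filter, Fin.forall_fin_succ]
    simp
    tauto
  · have hm : ∀ i, m a i % 2 = e i := by
      have := (Finset.mem_filter.mp ha).2
      simp only [Fin.forall_fin_succ]
      simp
      tauto
    have key : ∀ i d, realRoot i ^ 2 = d → realRoot i ^ m a i =
        realRoot i ^ e i * d ^ (m a i / 2) := by
      intro i d hd
      rw [← hd, ← pow_mul, ← pow_add, ← hm i, Nat.mod_add_div]
    rw [Fin.prod_univ_three, Fin.prod_univ_three, key 0 2 (by simp [realRoot]),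
      key 1 3 (by simp [realRoot]), key 2 Real.goldenRatio
        (by simp only [realRoot, Matrix.cons_val]; rw [Real.sq_sqrt Real.goldenRatio_pos.le]), hphi]
    push_cast
    ring

end

/-- The power series `p` converges absolutely at `1`, with sum of absolute values at most `B`. -/
def PowerSeries.NormSumLE (p : PowerSeries ℂ) (B : ℝ) : Prop :=
  Summable (fun i => ‖p.coeff i‖) ∧ ∑' i, ‖p.coeff i‖ ≤ B

namespace PowerSeries.NormSumLE

open PowerSeries

theorem mul {p q : PowerSeries ℂ} {A B : ℝ} (hp : p.NormSumLE A) (hq : q.NormSumLE B) :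
    (p * q).NormSumLE (A * B) := by
  have h1 := summable_norm_sum_mul_antidiagonal_of_summable_norm hp.1.norm hq.1.norm
  have h2 := tsum_mul_tsum_eq_tsum_sum_antidiagonal_of_summable_norm hp.1.norm hq.1.norm
  have hle : ∀ k, ‖(p * q).coeff k‖ ≤
      ∑ kl ∈ Finset.HasAntidiagonal.antidiagonal k, ‖p.coeff kl.1‖ * ‖q.coeff kl.2‖ := by
    intro k
    rw [PowerSeries.coeff_mul]
    exact (norm_sum_le _ _).trans_eq (by simp)
  have h1' := h1.of_norm
  have hs : Summable fun k => ‖(p * q).coeff k‖ :=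
    Summable.of_nonneg_of_le (fun _ => norm_nonneg _) hle h1'
  refine ⟨hs, (hs.tsum_le_tsum hle h1').trans ?_⟩
  rw [← h2]
  exact mul_le_mul hp.2 hq.2 (tsum_nonneg fun _ => norm_nonneg _)
    ((tsum_nonneg fun _ => norm_nonneg _).trans hp.2)

theorem one : (1 : PowerSeries ℂ).NormSumLE 1 := by
  have h : ∀ i, i ≠ 0 → ‖(1 : PowerSeries ℂ).coeff i‖ = 0 := by
    intro i hi
    simp [PowerSeries.coeff_one, hi]
  refine ⟨summable_of_ne_finset_zero (s := {0}) fun i hi => h i (by simpa using hi), ?_⟩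
  rw [tsum_eq_single 0 h]
  simp

theorem pow {p : PowerSeries ℂ} {A : ℝ} (hp : p.NormSumLE A) (k : ℕ) :
    (p ^ k).NormSumLE (A ^ k) := by
  induction k with
  | zero => simpa using one
  | succ k ih => rw [pow_succ, pow_succ]; exact ih.mul hp

theorem prod {ι : Type*} (s : Finset ι) {p : ι → PowerSeries ℂ} {A : ι → ℝ}
    (hp : ∀ i ∈ s, (p i).NormSumLE (A i)) : (∏ i ∈ s, p i).NormSumLE (∏ i ∈ s, A i) := by
  classical
  induction s using Finset.induction_on with
  | empty => simpa using one
  | insert i s hi ih =>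
    rw [Finset.prod_insert hi, Finset.prod_insert hi]
    exact (hp i (by simp)).mul (ih fun j hj => hp j (by simp [hj]))

theorem coe_polynomial {p : Polynomial ℂ} {n : ℕ} {B : ℝ} (hdeg : p.natDegree < n)
    (h : ∑ i ∈ Finset.range n, ‖p.coeff i‖ ≤ B) : (p : PowerSeries ℂ).NormSumLE B := by
  have h0 : ∀ i ∉ Finset.range n, ‖(p : PowerSeries ℂ).coeff i‖ = 0 := by
    intro i hi
    rw [Polynomial.coeff_coe, Polynomial.coeff_eq_zero_of_natDegree_lt, norm_zero]
    simp at hi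
    omega
  refine ⟨summable_of_ne_finset_zero h0, ?_⟩
  rw [tsum_eq_sum h0]
  simpa using h

theorem inv_linear {D : ℂ} (hD : 1 < ‖D‖) :
    (PowerSeries.mk fun j => (-1) ^ j * D⁻¹ ^ (j + 1)).NormSumLE (1 / (‖D‖ - 1)) := by
  have hD0 : ‖D‖ ≠ 0 := by linarith
  have h1 : ‖D‖⁻¹ < 1 := inv_lt_one_of_one_lt₀ hD
  have h2 : HasSum (fun j : ℕ => ‖D‖⁻¹ ^ j * ‖D‖⁻¹) ((1 - ‖D‖⁻¹)⁻¹ * ‖D‖⁻¹) :=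
    (hasSum_geometric_of_lt_one (by positivity) h1).mul_right _
  have h3 : (fun i => ‖(PowerSeries.mk fun j => (-1) ^ j * D⁻¹ ^ (j + 1)).coeff i‖) =
      fun j : ℕ => ‖D‖⁻¹ ^ j * ‖D‖⁻¹ := by
    ext i
    simp [pow_succ]
  rw [NormSumLE, h3]
  refine ⟨h2.summable, h2.tsum_eq.le.trans_eq ?_⟩
  have : ‖D‖ - 1 ≠ 0 := by linarith
  field_simp

theorem linear_mul_inv {D : ℂ} (hD : D ≠ 0) :
    (PowerSeries.X + PowerSeries.C D) * (PowerSeries.mk fun j => (-1) ^ j * D⁻¹ ^ (j + 1)) = 1 := by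
  ext i
  rw [add_mul, map_add, PowerSeries.coeff_C_mul]
  cases i with
  | zero => simp [hD]
  | succ i =>
    rw [PowerSeries.coeff_succ_X_mul]
    simp [PowerSeries.coeff_one]
    field_simp
    ring

/-- Evaluation of a truncation. -/
theorem norm_eval_trunc_le {p : PowerSeries ℂ} {B R : ℝ} (hp : p.NormSumLE B) (hR : 1 ≤ R) (k : ℕ)
    {v : ℂ} (hv : ‖v‖ ≤ R) : ‖(p.trunc k).eval v‖ ≤ B * R ^ k := by
  have hB : ∑ i ∈ Finset.range k, ‖p.coeff i‖ ≤ B :=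
    (hp.1.sum_le_tsum _ fun _ _ => norm_nonneg _).trans hp.2
  rcases Nat.eq_zero_or_pos k with rfl | hk
  · simpa using (tsum_nonneg fun _ => norm_nonneg _).trans hp.2
  have hdeg : (p.trunc k).natDegree < k := by
    obtain ⟨m, rfl⟩ := Nat.exists_eq_add_of_lt hk
    rw [zero_add]
    exact PowerSeries.natDegree_trunc_lt p m
  rw [Polynomial.eval_eq_sum_range' hdeg]
  refine (norm_sum_le _ _).trans ?_
  have h2 : ∀ i ∈ Finset.range k, ‖(p.trunc k).coeff i * v ^ i‖ ≤ ‖p.coeff i‖ * R ^ k := by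
    intro i hi
    have hi' := Finset.mem_range.mp hi
    rw [PowerSeries.coeff_trunc, if_pos hi', norm_mul, norm_pow]
    gcongr
    exact (pow_le_pow_left₀ (norm_nonneg _) hv i).trans (pow_le_pow_right₀ hR hi'.le)
  refine (Finset.sum_le_sum h2).trans ?_
  rw [← Finset.sum_mul]
  gcongr

end PowerSeries.NormSumLE

/-- Cancelling a factor that does not vanish at `s`. -/
theorem exists_eq_pow_mul_of_mul_eq {A : ℂ → ℂ} {s : ℂ} (hA : Continuous A) (hs : A s ≠ 0) (k : ℕ) :
    ∀ g h : ℂ → ℂ, Differentiable ℂ g → Continuous h → (∀ z, A z * g z = (z - s) ^ k * h z) →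
      ∃ g' : ℂ → ℂ, Differentiable ℂ g' ∧ ∀ z, g z = (z - s) ^ k * g' z := by
  induction k with
  | zero => intro g h hg _ _; exact ⟨g, hg, by simp⟩
  | succ k ih =>
    intro g h hg hh heq
    have h0 : g s = 0 := by
      have := heq s
      simp [hs] at this
      exact this
    have h1 : Differentiable ℂ (dslope g s) := by
      rw [← differentiableOn_univ] at hg ⊢
      exact (Complex.differentiableOn_dslope Filter.univ_mem).mpr hg
    have h2 : ∀ z, g z = (z - s) * dslope g s z := by
      intro z
      have := sub_smul_dslope g s z
      rw [h0, sub_zero, smul_eq_mul] at this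
      exact this.symm
    have h3 : (fun z => A z * dslope g s z) = fun z => (z - s) ^ k * h z := by
      refine Continuous.ext_on (s := {s}ᶜ) (dense_compl_singleton s) (hA.mul h1.continuous)
        (by fun_prop) fun z hz => ?_
      have hz' : z - s ≠ 0 := sub_ne_zero.mpr hz
      refine mul_left_cancel₀ hz' ?_
      have := heq z
      rw [h2 z, pow_succ] at this
      linear_combination this
    obtain ⟨g', hg', h4⟩ := ih _ h h1 hh (congrFun h3)
    exact ⟨g', hg', fun z => by rw [h2 z, h4 z, pow_succ]; ring⟩

theorem exists_eq_prod_pow_mul {n K : ℕ} {F : ℂ → ℂ} (hF : Differentiable ℂ F) {s : ℕ → ℂ}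
    (hs : Function.Injective s) {h : ℕ → ℂ → ℂ} (hh : ∀ i, Differentiable ℂ (h i))
    (heq : ∀ i < n, ∀ z, F z = (z - s i) ^ K * h i z) :
    ∃ g : ℂ → ℂ, Differentiable ℂ g ∧ ∀ z, F z = (∏ i ∈ Finset.range n, (z - s i) ^ K) * g z := by
  induction n with
  | zero => exact ⟨F, hF, by simp⟩
  | succ n ih =>
    obtain ⟨g, hg, h1⟩ := ih fun i hi => heq i (by omega)
    obtain ⟨g', hg', h2⟩ := exists_eq_pow_mul_of_mul_eq (s := s n)
      (A := fun z => ∏ i ∈ Finset.range n, (z - s i) ^ K) (by fun_prop) (by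
        refine Finset.prod_ne_zero_iff.mpr fun i hi => pow_ne_zero _ (sub_ne_zero.mpr fun h => ?_)
        have := hs h
        simp at hi
        omega) K g (h n) hg (hh n).continuous
      (fun z => by rw [← h1 z, heq n (by omega) z])
    exact ⟨g', hg', fun z => by rw [h1 z, h2 z, Finset.prod_range_succ]; ring⟩

/-- Taylor expansion of the exponential with an entire remainder. -/
theorem Complex.exists_exp_eq_sum_add (K : ℕ) : ∃ r : ℂ → ℂ, Differentiable ℂ r ∧
    ∀ w, Complex.exp w = ∑ t ∈ Finset.range K, w ^ t / t.factorial + w ^ K * r w := by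
  have hs : ∀ R : ℝ, Summable fun i : ℕ => R ^ i / i.factorial := Real.summable_pow_div_factorial
  have hle : ∀ (i : ℕ) (w : ℂ) (R : ℝ), ‖w‖ ≤ R →
      ‖w ^ i / ((i + K).factorial : ℂ)‖ ≤ R ^ i / i.factorial := by
    intro i w R hw
    rw [norm_div, norm_pow, Complex.norm_natCast]
    have hR : 0 ≤ R := (norm_nonneg w).trans hw
    have : (i.factorial : ℝ) ≤ (i + K).factorial := by
      exact_mod_cast Nat.factorial_le (by omega)
    gcongr
  refine ⟨fun w => ∑' i : ℕ, w ^ i / ((i + K).factorial : ℂ), fun z => ?_, fun w => ?_⟩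
  · have h1 : DifferentiableOn ℂ (fun w : ℂ => ∑' i : ℕ, w ^ i / ((i + K).factorial : ℂ))
        (Metric.ball 0 (‖z‖ + 1)) := by
      refine Complex.differentiableOn_tsum_of_summable_norm (hs (‖z‖ + 1)) (fun i => ?_)
        Metric.isOpen_ball fun i w hw => hle i w _ ?_
      · fun_prop
      · exact (by simpa using hw : ‖w‖ < ‖z‖ + 1).le
    exact h1.differentiableAt (Metric.isOpen_ball.mem_nhds (by simp))
  · have h1 : HasSum (fun i : ℕ => w ^ i / (i.factorial : ℂ)) (Complex.exp w) := by
      rw [Complex.exp_eq_exp_ℂ]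
      exact NormedSpace.expSeries_div_hasSum_exp w
    rw [← h1.tsum_eq, ← h1.summable.sum_add_tsum_nat_add K, ← tsum_mul_left]
    congr 1
    refine tsum_congr fun i => ?_
    rw [pow_add]
    ring

open Polynomial in
/-- Quantitative Hermite interpolation. -/
theorem exists_hermite_interpolant {n K : ℕ} (s : ℕ → ℂ)
    (hs : ∀ i < n, ∀ j < n, i ≠ j → 1 < ‖s i - s j‖) (P : ℕ → ℂ[X]) {η : ℝ}
    (hdeg : ∀ i, (P i).natDegree < K)
    (hP : ∀ i < n, ∑ t ∈ Finset.range K, ‖(P i).coeff t‖ ≤ η) :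
    ∃ H : ℂ[X], (∀ i < n, (X - C (s i)) ^ K ∣ H - (P i).comp (X - C (s i))) ∧
      ∀ (z : ℂ) (R : ℝ), 1 ≤ R → (∀ i < n, ‖z - s i‖ ≤ R) → ‖H.eval z‖ ≤
        ∑ i ∈ Finset.range n,
          η * (R ^ n / ∏ j ∈ (Finset.range n).erase i, (‖s i - s j‖ - 1)) ^ K := by
  set J : ℕ → ℕ → PowerSeries ℂ := fun i j =>
    PowerSeries.mk fun k => (-1) ^ k * (s i - s j)⁻¹ ^ (k + 1) with hJ
  set I : ℕ → PowerSeries ℂ := fun i => ∏ j ∈ (Finset.range n).erase i, J i j ^ K with hI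
  set R' : ℕ → ℂ[X] := fun i => ((P i : PowerSeries ℂ) * I i).trunc K with hR'
  set Q : ℕ → ℂ[X] := fun i => ∏ j ∈ (Finset.range n).erase i, (X - C (s j)) ^ K with hQ
  have hmem : ∀ i < n, ∀ j ∈ (Finset.range n).erase i, 1 < ‖s i - s j‖ := by
    intro i hi j hj
    simp only [Finset.mem_erase, Finset.mem_range] at hj
    exact hs i hi j hj.2 hj.1.symm
  refine ⟨∑ i ∈ Finset.range n, Q i * (R' i).comp (X - C (s i)), fun i hi => ?_,
    fun z R hR hz => ?_⟩
  · rw [← Finset.add_sum_erase _ _ (Finset.mem_range.mpr hi), add_sub_right_comm]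
    refine dvd_add ?_ (Finset.dvd_sum fun j hj => ?_)
    · set T : ℂ[X] := ∏ j ∈ (Finset.range n).erase i, (X + C (s i - s j)) ^ K with hT
      have hcomp : Q i = T.comp (X - C (s i)) := by
        rw [hT, Polynomial.prod_comp]
        refine Finset.prod_congr rfl fun j _ => ?_
        simp
      have hTI : (T : PowerSeries ℂ) * I i = 1 := by
        have : (T : PowerSeries ℂ) =
            ∏ j ∈ (Finset.range n).erase i, (PowerSeries.X + PowerSeries.C (s i - s j)) ^ K := by
          rw [hT, ← Polynomial.coeToPowerSeries.ringHom_apply, map_prod]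
          simp
        rw [this, hI, ← Finset.prod_mul_distrib]
        refine Finset.prod_eq_one fun j hj => ?_
        rw [← mul_pow, PowerSeries.NormSumLE.linear_mul_inv, one_pow]
        exact norm_pos_iff.mp (by linarith [hmem i hi j hj])
      have hdvd : X ^ K ∣ T * R' i - P i := by
        rw [Polynomial.X_pow_dvd_iff]
        intro d hd
        have h1 : PowerSeries.trunc K ((T * R' i - P i : ℂ[X]) : PowerSeries ℂ) = 0 := by
          rw [Polynomial.coe_sub, map_sub, Polynomial.coe_mul, hR', PowerSeries.trunc_mul_trunc,
            mul_left_comm, hTI, mul_one, sub_self]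
        have h2 := congrArg (fun p => Polynomial.coeff p d) h1
        simp only [PowerSeries.coeff_trunc, if_pos hd, Polynomial.coeff_coe,
          Polynomial.coeff_zero] at h2
        exact h2
      obtain ⟨W, hW⟩ := hdvd
      refine ⟨W.comp (X - C (s i)), ?_⟩
      rw [hcomp, ← Polynomial.mul_comp, ← Polynomial.sub_comp, hW]
      simp
    · refine Dvd.dvd.mul_right ?_ _
      refine Finset.dvd_prod_of_mem (fun j => (X - C (s j)) ^ K) ?_
      simp only [Finset.mem_erase, Finset.mem_range] at hj ⊢
      exact ⟨hj.1.symm, hi⟩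
  · rw [Polynomial.eval_finsetSum]
    refine (norm_sum_le _ _).trans (Finset.sum_le_sum fun i hi => ?_)
    have hi' := Finset.mem_range.mp hi
    have hη : 0 ≤ η := (Finset.sum_nonneg fun _ _ => norm_nonneg _).trans (hP i hi')
    have h1 : ‖(Q i).eval z‖ ≤ (R ^ (n - 1)) ^ K := by
      rw [hQ, Polynomial.eval_prod, norm_prod]
      refine (Finset.prod_le_prod (g := fun _ => R ^ K) (fun _ _ => norm_nonneg _)
        fun j hj => ?_).trans_eq ?_
      · simp only [Polynomial.eval_pow, Polynomial.eval_sub, Polynomial.eval_X, Polynomial.eval_C,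
          norm_pow]
        simp only [Finset.mem_erase, Finset.mem_range] at hj
        exact pow_le_pow_left₀ (norm_nonneg _) (hz j hj.2) _
      · rw [Finset.prod_const, Finset.card_erase_of_mem hi, Finset.card_range, ← pow_mul, ← pow_mul,
          mul_comm]
    have h2 : ((P i : PowerSeries ℂ) * I i).NormSumLE
        (η * ∏ j ∈ (Finset.range n).erase i, (1 / (‖s i - s j‖ - 1)) ^ K) := by
      refine (PowerSeries.NormSumLE.coe_polynomial (hdeg i) (hP i hi')).mul ?_
      refine PowerSeries.NormSumLE.prod _ fun j hj => ?_
      exact (PowerSeries.NormSumLE.inv_linear (hmem i hi' j hj)).pow K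
    have h3 := PowerSeries.NormSumLE.norm_eval_trunc_le h2 hR K (hz i hi')
    rw [Polynomial.eval_mul, norm_mul, Polynomial.eval_comp]
    simp only [Polynomial.eval_sub, Polynomial.eval_X, Polynomial.eval_C]
    refine (mul_le_mul h1 h3 (norm_nonneg _) (by positivity)).trans_eq ?_
    obtain ⟨m, rfl⟩ := Nat.exists_eq_add_of_lt hi'
    rw [Finset.prod_pow, Finset.prod_div_distrib, Finset.prod_const_one, div_pow, div_pow, one_pow]
    simp only [Nat.add_sub_cancel]
    ring

theorem prod_erase_two_mul_sub_ge {n i : ℕ} (hi : i < n) :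
    (n : ℝ) ^ n / (4 * Real.exp 1) ^ n ≤
      ∏ j ∈ (Finset.range n).erase i, (‖(2 * i + 1 : ℂ) - (2 * j + 1)‖ - 1) := by
  have h1 : ∀ j : ℕ, ‖(2 * i + 1 : ℂ) - (2 * j + 1)‖ = 2 * |(i : ℝ) - j| := by
    intro j
    have : (2 * i + 1 : ℂ) - (2 * j + 1) = ((2 * ((i : ℝ) - j) : ℝ) : ℂ) := by push_cast; ring
    rw [this, Complex.norm_real, Real.norm_eq_abs, abs_mul, abs_two]
  have hge : ∀ j ∈ (Finset.range n).erase i, (1 : ℝ) ≤ |(i : ℝ) - j| := by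
    intro j hj
    have hne : (i : ℤ) - j ≠ 0 := by
      have := (Finset.mem_erase.mp hj).1
      omega
    exact_mod_cast Int.one_le_abs hne
  have h2 : ∏ j ∈ (Finset.range n).erase i, |(i : ℝ) - j| =
      (i.factorial : ℝ) * (n - 1 - i).factorial := by
    have hsplit : (Finset.range n).erase i = Finset.range i ∪ Finset.Ico (i + 1) n := by
      ext j
      simp only [Finset.mem_erase, Finset.mem_range, Finset.mem_union, Finset.mem_Ico]
      omega
    rw [hsplit, Finset.prod_union]
    · congr 1
      · rw [← Finset.prod_range_add_one_eq_factorial, ← Finset.prod_range_reflect]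
        push_cast
        refine Finset.prod_congr rfl fun j hj => ?_
        have hj' := Finset.mem_range.mp hj
        rw [abs_of_nonneg (by simp; omega)]
        rw [Nat.cast_sub (by omega), Nat.cast_sub (by omega)]
        push_cast
        ring
      · rw [Finset.prod_Ico_eq_prod_range, ← Finset.prod_range_add_one_eq_factorial]
        push_cast
        rw [show n - (i + 1) = n - 1 - i by omega]
        refine Finset.prod_congr rfl fun j _ => ?_
        rw [abs_sub_comm, abs_of_nonneg (by linarith [Nat.cast_nonneg (α := ℝ) j])]
        ring
    · rw [Finset.disjoint_left]
      intro j hj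
      simp only [Finset.mem_range, Finset.mem_Ico] at hj ⊢
      omega
  have h3 : (n.factorial : ℝ) ≤ 4 ^ n * ((i.factorial : ℝ) * (n - 1 - i).factorial) := by
    have h4 := Nat.choose_mul_factorial_mul_factorial (show i ≤ n - 1 by omega)
    have h5 : n.factorial = n * (n - 1).factorial := (Nat.mul_factorial_pred (by omega)).symm
    have h6 : (n - 1).choose i ≤ 2 ^ n :=
      (Nat.choose_le_two_pow _ _).trans (Nat.pow_le_pow_right (by norm_num) (by omega))
    have h7 : n ≤ 2 ^ n := Nat.lt_two_pow_self.le
    have h8 : n.factorial ≤ 4 ^ n * (i.factorial * (n - 1 - i).factorial) := by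
      rw [h5, ← h4, mul_assoc, ← mul_assoc n, show (4 : ℕ) ^ n = 2 ^ n * 2 ^ n by
        rw [← mul_pow]; norm_num]
      gcongr
    exact_mod_cast h8
  have h9 := Real.pow_div_factorial_le_exp (n : ℝ) (Nat.cast_nonneg n) n
  have h10 : (n : ℝ) ^ n ≤ Real.exp 1 ^ n * n.factorial := by
    rw [div_le_iff₀ (by positivity)] at h9
    rwa [← Real.exp_nat_mul, mul_one]
  calc (n : ℝ) ^ n / (4 * Real.exp 1) ^ n ≤ (i.factorial : ℝ) * (n - 1 - i).factorial := by
        rw [div_le_iff₀ (by positivity), mul_pow]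
        calc (n : ℝ) ^ n ≤ Real.exp 1 ^ n * n.factorial := h10
          _ ≤ Real.exp 1 ^ n * (4 ^ n * ((i.factorial : ℝ) * (n - 1 - i).factorial)) := by gcongr
          _ = _ := by ring
    _ = ∏ j ∈ (Finset.range n).erase i, |(i : ℝ) - j| := h2.symm
    _ ≤ _ := Finset.prod_le_prod (fun _ _ => abs_nonneg _) fun j hj => by
        rw [h1]; linarith [hge j hj]

/-- Schwarz's lemma at the odd integers, when the Taylor coefficients at the nodes are small. -/
theorem norm_le_of_small_taylor {n K : ℕ} (hn : 1 ≤ n) (hK : 1 ≤ K) {f : ℂ → ℂ}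
    (hf : Differentiable ℂ f) (a : ℕ → ℕ → ℂ) (g : ℕ → ℂ → ℂ) (hg : ∀ i, Differentiable ℂ (g i))
    (hfg : ∀ i < n, ∀ z, f z = ∑ t ∈ Finset.range K, a i t * (z - (2 * i + 1)) ^ t +
      (z - (2 * i + 1)) ^ K * g i z)
    {η M : ℝ} (hη : ∀ i < n, ∑ t ∈ Finset.range K, ‖a i t‖ ≤ η)
    (hM : ∀ z : ℂ, ‖z‖ = 22 * n → ‖f z‖ ≤ M) {w : ℝ} (hw0 : 0 ≤ w) (hw : w ≤ 2 * n) :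
    ‖f w‖ ≤ M / 10 ^ (n * K) + 2 * n * η * 261 ^ (n * K) := by
  have hnR : (1 : ℝ) ≤ n := by exact_mod_cast hn
  set s : ℕ → ℂ := fun i => 2 * i + 1 with hs
  have hsinj : Function.Injective s := by
    intro i j hij
    simp only [hs] at hij
    have : (i : ℂ) = j := by linear_combination hij / 2
    exact_mod_cast this
  have hsR : ∀ i, s i = ((2 * i + 1 : ℝ) : ℂ) := fun i => by simp [hs]
  have hnodes : ∀ i < n, ∀ j < n, i ≠ j → 1 < ‖s i - s j‖ := by
    intro i _ j _ hij
    rw [hsR, hsR, ← Complex.ofReal_sub, Complex.norm_real, Real.norm_eq_abs]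
    have hne : (2 * (i : ℤ) + 1) - (2 * j + 1) ≠ 0 := by omega
    have h2 : 1 < |(2 * (i : ℤ) + 1) - (2 * j + 1)| := by
      rw [lt_abs]
      omega
    exact_mod_cast h2
  set P : ℕ → Polynomial ℂ := fun i =>
    ∑ t ∈ Finset.range K, Polynomial.C (a i t) * Polynomial.X ^ t with hP
  have hcoeff : ∀ i t, (P i).coeff t = if t < K then a i t else 0 := by
    intro i t
    simp [hP, Polynomial.coeff_C_mul, Polynomial.coeff_X_pow]
  have hdeg : ∀ i, (P i).natDegree < K := by
    intro i
    have : (P i).natDegree ≤ K - 1 := by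
      rw [Polynomial.natDegree_le_iff_coeff_eq_zero]
      intro t ht
      rw [hcoeff, if_neg (by omega)]
    omega
  obtain ⟨H, hH1, hH2⟩ := exists_hermite_interpolant s hnodes P (η := η) hdeg fun i hi => by
    refine le_trans (Finset.sum_le_sum fun t ht => ?_) (hη i hi)
    rw [hcoeff, if_pos (Finset.mem_range.mp ht)]
  have hH3 : ∀ z : ℂ, ‖z‖ ≤ 22 * n → ‖H.eval z‖ ≤ n * η * 261 ^ (n * K) := by
    intro z hz
    have h1 : ∀ i < n, ‖z - s i‖ ≤ 24 * n := by
      intro i hi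
      refine (norm_sub_le _ _).trans ?_
      rw [hsR, Complex.norm_real, Real.norm_eq_abs, abs_of_nonneg (by positivity)]
      have : (i : ℝ) + 1 ≤ n := by exact_mod_cast hi
      linarith
    refine (hH2 z (24 * n) (by linarith) h1).trans ?_
    have h2 : ∀ i ∈ Finset.range n, η * ((24 * n : ℝ) ^ n /
        ∏ j ∈ (Finset.range n).erase i, (‖s i - s j‖ - 1)) ^ K ≤ η * 261 ^ (n * K) := by
      intro i hi
      have hi' := Finset.mem_range.mp hi
      have hη0 : 0 ≤ η := (Finset.sum_nonneg fun _ _ => norm_nonneg _).trans (hη i hi')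
      have h3 := prod_erase_two_mul_sub_ge hi'
      have hpos : 0 < (n : ℝ) ^ n / (4 * Real.exp 1) ^ n := by positivity
      have h4 : (24 * n : ℝ) ^ n / ∏ j ∈ (Finset.range n).erase i, (‖s i - s j‖ - 1) ≤ 261 ^ n := by
        calc _ ≤ (24 * n : ℝ) ^ n / ((n : ℝ) ^ n / (4 * Real.exp 1) ^ n) := by gcongr
          _ = (96 * Real.exp 1) ^ n := by
            rw [div_div_eq_mul_div, ← mul_pow, ← div_pow]
            congr 1
            field_simp
            ring
          _ ≤ _ := by
            gcongr
            linarith [Real.exp_one_lt_d9]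
      have h5 : 0 ≤ (24 * n : ℝ) ^ n / ∏ j ∈ (Finset.range n).erase i, (‖s i - s j‖ - 1) :=
        div_nonneg (by positivity) (hpos.le.trans h3)
      rw [pow_mul]
      gcongr
    refine (Finset.sum_le_sum h2).trans_eq ?_
    rw [Finset.sum_const, Finset.card_range, nsmul_eq_mul]
    ring
  choose W hW using hH1
  have hF : Differentiable ℂ fun z => f z - H.eval z := by fun_prop
  obtain ⟨G, hG, hFG⟩ := exists_eq_prod_pow_mul (n := n) (K := K) hF hsinj
    (h := fun i z => g i z - if hi : i < n then (W i hi).eval z else 0)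
    (fun i => by split_ifs <;> fun_prop)
    (fun i hi z => by
      have h1 := congrArg (Polynomial.eval z) (hW i hi)
      simp only [Polynomial.eval_sub, Polynomial.eval_comp, Polynomial.eval_X, Polynomial.eval_C,
        Polynomial.eval_mul, Polynomial.eval_pow] at h1
      have h2 : (P i).eval (z - s i) = ∑ t ∈ Finset.range K, a i t * (z - s i) ^ t := by
        simp [hP, Polynomial.eval_finsetSum]
      rw [h2] at h1
      have h3 := hfg i hi z
      simp only [hi, dif_pos]
      linear_combination h3 - h1)
  have hball : w ∈ Set.Icc (0 : ℝ) (2 * n) := ⟨hw0, hw⟩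
  have hGw : ‖G w‖ ≤ (M + n * η * 261 ^ (n * K)) / (20 * n) ^ (n * K) := by
    refine Complex.norm_le_of_forall_mem_frontier_norm_le (U := Metric.ball 0 (22 * n))
      Metric.isBounded_ball hG.diffContOnCl (fun z hz => ?_) (subset_closure ?_)
    · rw [frontier_ball _ (by positivity)] at hz
      have hz' : ‖z‖ = 22 * n := by simpa using hz
      have h1 : (20 * n : ℝ) ^ (n * K) ≤ ‖∏ i ∈ Finset.range n, (z - s i) ^ K‖ := by
        rw [norm_prod]
        calc (20 * n : ℝ) ^ (n * K) = ∏ i ∈ Finset.range n, (20 * n : ℝ) ^ K := by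
              rw [Finset.prod_const, Finset.card_range, ← pow_mul, mul_comm K]
          _ ≤ _ := Finset.prod_le_prod (fun _ _ => by positivity) fun i hi => by
              rw [norm_pow]
              gcongr
              have h2 := norm_sub_norm_le z (s i)
              rw [hsR, Complex.norm_real, Real.norm_eq_abs, abs_of_nonneg (by positivity)] at h2
              have : (i : ℝ) + 1 ≤ n := by exact_mod_cast Finset.mem_range.mp hi
              rw [hsR]
              linarith
      have h2 := congrArg norm (hFG z)
      rw [norm_mul] at h2
      rw [le_div_iff₀ (by positivity), mul_comm]
      calc _ ≤ ‖∏ i ∈ Finset.range n, (z - s i) ^ K‖ * ‖G z‖ := by gcongr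
        _ = ‖f z - H.eval z‖ := h2.symm
        _ ≤ _ := (norm_sub_le _ _).trans (add_le_add (hM z hz') (hH3 z hz'.le))
    · simp only [Metric.mem_ball, dist_zero_right, Complex.norm_real, Real.norm_eq_abs]
      rw [abs_of_nonneg hw0]
      linarith
  have hQw : ‖∏ i ∈ Finset.range n, ((w : ℂ) - s i) ^ K‖ ≤ (2 * n : ℝ) ^ (n * K) := by
    rw [norm_prod]
    calc _ ≤ ∏ i ∈ Finset.range n, (2 * n : ℝ) ^ K :=
          Finset.prod_le_prod (fun _ _ => norm_nonneg _) fun i hi => by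
            rw [norm_pow]
            gcongr
            rw [hsR, ← Complex.ofReal_sub, Complex.norm_real, Real.norm_eq_abs, abs_le]
            have : (i : ℝ) + 1 ≤ n := by exact_mod_cast Finset.mem_range.mp hi
            have : (0 : ℝ) ≤ i := Nat.cast_nonneg i
            constructor <;> linarith
      _ = _ := by rw [Finset.prod_const, Finset.card_range, ← pow_mul, mul_comm K]
  have hfw : f w = (∏ i ∈ Finset.range n, ((w : ℂ) - s i) ^ K) * G w + H.eval (w : ℂ) := by
    linear_combination hFG w
  have hHw : ‖H.eval (w : ℂ)‖ ≤ n * η * 261 ^ (n * K) := hH3 w (by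
    rw [Complex.norm_real, Real.norm_eq_abs, abs_of_nonneg hw0]; linarith)
  have hη0 : 0 ≤ η := (Finset.sum_nonneg fun _ _ => norm_nonneg _).trans (hη 0 hn)
  have hprod : ‖(∏ i ∈ Finset.range n, ((w : ℂ) - s i) ^ K) * G w‖ ≤
      (M + n * η * 261 ^ (n * K)) / 10 ^ (n * K) := by
    rw [norm_mul]
    refine (mul_le_mul hQw hGw (norm_nonneg _) (by positivity)).trans_eq ?_
    rw [show (20 * n : ℝ) = 10 * (2 * n) by ring, mul_pow (10 : ℝ)]
    field_simp
  have h10 : n * η * 261 ^ (n * K) / 10 ^ (n * K) ≤ n * η * 261 ^ (n * K) :=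
    div_le_self (by positivity) (one_le_pow₀ (by norm_num))
  rw [hfw]
  refine (norm_add_le _ _).trans ?_
  rw [add_div] at hprod
  linarith

/-- All monomials in `X`, `Y` of degree less than `T` are annihilated by the weight `w`. -/
def MomentsVanish {α : Type*} (S : Finset α) (X Y : α → ℝ) (T : ℕ) (w : α → ℝ) : Prop :=
  ∀ i j : ℕ, i + j < T → ∑ a ∈ S, w a * X a ^ i * Y a ^ j = 0

namespace MomentsVanish

variable {α : Type*} {S : Finset α} {X Y : α → ℝ} {T : ℕ} {w : α → ℝ}

theorem mul_affine (h : MomentsVanish S X Y T w) (u v r : ℝ) :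
    MomentsVanish S X Y (T - 1) fun a => w a * (u * X a + v * Y a + r) := by
  intro i j hij
  have h1 := h (i + 1) j (by omega)
  have h2 := h i (j + 1) (by omega)
  have h3 := h i j (by omega)
  calc _ = u * ∑ a ∈ S, w a * X a ^ (i + 1) * Y a ^ j + v * ∑ a ∈ S, w a * X a ^ i * Y a ^ (j + 1) +
        r * ∑ a ∈ S, w a * X a ^ i * Y a ^ j := by
        simp only [Finset.mul_sum, ← Finset.sum_add_distrib]
        refine Finset.sum_congr rfl fun a _ => ?_
        ring
    _ = 0 := by rw [h1, h2, h3]; ring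

theorem mul_affine_pow (h : MomentsVanish S X Y T w) (u v r : ℝ) (k : ℕ) :
    MomentsVanish S X Y (T - k) fun a => w a * (u * X a + v * Y a + r) ^ k := by
  induction k with
  | zero => simpa using h
  | succ k ih =>
    have := ih.mul_affine u v r
    simp only [mul_assoc, ← pow_succ] at this
    simpa only [Nat.sub_sub] using this

theorem sum_eq_zero (h : MomentsVanish S X Y T w) (hT : 0 < T) : ∑ a ∈ S, w a = 0 := by
  simpa using h 0 0 hT

end MomentsVanish

theorem sum_range_natCast_mul_pow_div_factorial_le {E : ℝ} (hE : 0 ≤ E) (K : ℕ) :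
    ∑ t ∈ Finset.range K, (t : ℝ) * E ^ (t - 1) / t.factorial ≤ Real.exp E := by
  cases K with
  | zero => simpa using (Real.exp_pos E).le
  | succ K =>
    rw [Finset.sum_range_succ']
    simp only [Nat.cast_zero, zero_mul, zero_div, add_zero, Nat.add_sub_cancel]
    refine le_trans (Finset.sum_le_sum fun t _ => ?_) (Real.sum_le_exp_of_nonneg hE K)
    rw [Nat.factorial_succ]
    push_cast
    have : (t : ℝ) + 1 ≠ 0 := by positivity
    field_simp
    exact le_rfl

/-- An exponential sum whose moments vanish at the odd integers is small at nearby points. -/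
theorem abs_exp_sum_le_of_momentsVanish {α : Type*} (S : Finset α) (X Y θ c : α → ℝ)
    {κ₁ κ₂ E e A : ℝ} {n K : ℕ} (hn : 1 ≤ n) (hK : 1 ≤ K) (hθ0 : ∀ a ∈ S, 0 ≤ θ a)
    (hθE : ∀ a ∈ S, θ a ≤ E) (hE : 0 ≤ E) (he1 : e ≤ 1) (he0 : 0 ≤ e)
    (he : ∀ a ∈ S, |θ a - (κ₁ * X a + κ₂ * Y a)| ≤ e) (hA : ∑ a ∈ S, |c a| ≤ A)
    (h : ∀ s < n, MomentsVanish S X Y K fun a => c a * Real.exp (θ a * (2 * s + 1)))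
    {w : ℝ} (hw0 : 0 ≤ w) (hw : w ≤ 2 * n) :
    |∑ a ∈ S, c a * Real.exp (θ a * w)| ≤ A * Real.exp (E * (22 * n)) / 10 ^ (n * K) +
      2 * n * (A * Real.exp (E * (2 * n)) * (e * Real.exp (E + 1))) * 261 ^ (n * K) := by
  obtain ⟨r, hr, hexp⟩ := Complex.exists_exp_eq_sum_add K
  have hA0 : 0 ≤ A := (Finset.sum_nonneg fun _ _ => abs_nonneg _).trans hA
  set f : ℂ → ℂ := fun z => ∑ a ∈ S, (c a : ℂ) * Complex.exp (θ a * z) with hf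
  set d : ℕ → ℕ → ℝ := fun s t =>
    ∑ a ∈ S, c a * Real.exp (θ a * (2 * s + 1)) * (θ a ^ t / t.factorial) with hd
  set g : ℕ → ℂ → ℂ := fun s z => ∑ a ∈ S,
    (c a : ℂ) * Complex.exp (θ a * (2 * s + 1)) * (θ a ^ K * r (θ a * (z - (2 * s + 1)))) with hg
  have hfw : f w = ((∑ a ∈ S, c a * Real.exp (θ a * w) : ℝ) : ℂ) := by
    simp [hf]
  have key := norm_le_of_small_taylor (f := f) hn hK (by fun_prop) (fun s t => (d s t : ℂ)) g
    (fun s => by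
      refine Differentiable.fun_sum fun a _ => ?_
      refine (differentiable_const _).mul ((differentiable_const _).mul ?_)
      exact hr.comp (by fun_prop))
    (fun s hs z => ?_) (η := A * Real.exp (E * (2 * n)) * (e * Real.exp (E + 1)))
    (M := A * Real.exp (E * (22 * n))) (fun s hs => ?_) (fun z hz => ?_) hw0 hw
  · rwa [hfw, Complex.norm_real, Real.norm_eq_abs] at key
  · simp only [hf, hd, hg]
    push_cast
    simp only [Finset.sum_mul]
    rw [Finset.sum_comm, Finset.mul_sum, ← Finset.sum_add_distrib]
    refine Finset.sum_congr rfl fun a _ => ?_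
    have h1 := hexp (θ a * (z - (2 * s + 1)))
    rw [show (θ a : ℂ) * z = θ a * (2 * s + 1) + θ a * (z - (2 * s + 1)) by ring, Complex.exp_add,
      h1, mul_add, mul_add, Finset.mul_sum, Finset.mul_sum]
    congr 1
    · refine Finset.sum_congr rfl fun t _ => ?_
      rw [mul_pow]
      ring
    · rw [mul_pow]
      ring
  · have hs' : (s : ℝ) + 1 ≤ n := by exact_mod_cast hs
    have h1 : ∀ t ∈ Finset.range K, ‖(d s t : ℂ)‖ ≤
        A * Real.exp (E * (2 * n)) * e * (t * (E + 1) ^ (t - 1) / t.factorial) := by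
      intro t ht
      have h2 := ((h s hs).mul_affine_pow κ₁ κ₂ 0 t).sum_eq_zero
        (by have := Finset.mem_range.mp ht; omega)
      have h3 : d s t = ∑ a ∈ S, c a * (Real.exp (θ a * (2 * s + 1)) *
          ((θ a ^ t - (κ₁ * X a + κ₂ * Y a) ^ t) / t.factorial)) := by
        have h4 : ∑ a ∈ S, c a * Real.exp (θ a * (2 * s + 1)) *
            ((κ₁ * X a + κ₂ * Y a) ^ t / t.factorial) = 0 := by
          simp only [add_zero] at h2
          simp only [mul_div_assoc', ← Finset.sum_div, h2, zero_div]
        rw [← sub_zero (d s t), ← h4, hd, ← Finset.sum_sub_distrib]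
        refine Finset.sum_congr rfl fun a _ => ?_
        ring
      rw [Complex.norm_real, Real.norm_eq_abs, h3]
      refine (Finset.abs_sum_le_sum_abs _ _).trans ?_
      have h5 : ∀ a ∈ S, |c a * (Real.exp (θ a * (2 * s + 1)) *
          ((θ a ^ t - (κ₁ * X a + κ₂ * Y a) ^ t) / t.factorial))| ≤ |c a| *
          (Real.exp (E * (2 * n)) * (e * t * (E + 1) ^ (t - 1) / t.factorial)) := by
        intro a ha
        rw [abs_mul, abs_mul, abs_div, Real.abs_exp, Nat.abs_cast]
        have h6 := abs_pow_sub_pow_le (θ a) (κ₁ * X a + κ₂ * Y a) t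
        have h7 : max |θ a| |κ₁ * X a + κ₂ * Y a| ≤ E + 1 := by
          have := abs_le.mp (he a ha)
          have := hθ0 a ha
          have := hθE a ha
          refine max_le (abs_le.mpr ⟨by linarith, by linarith⟩)
            (abs_le.mpr ⟨by linarith, by linarith⟩)
        have h8 : θ a * (2 * s + 1) ≤ E * (2 * n) :=
          mul_le_mul (hθE a ha) (by linarith) (by positivity) hE
        gcongr
        refine h6.trans ?_
        gcongr
        exact he a ha
      refine (Finset.sum_le_sum h5).trans ?_
      rw [← Finset.sum_mul]
      refine (mul_le_mul_of_nonneg_right hA (by positivity)).trans_eq ?_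
      ring
    refine (Finset.sum_le_sum h1).trans ?_
    rw [← Finset.mul_sum]
    have h2 := sum_range_natCast_mul_pow_div_factorial_le (E := E + 1) (by linarith) K
    refine (mul_le_mul_of_nonneg_left h2 (by positivity)).trans_eq ?_
    ring
  · refine (norm_sum_le _ _).trans ?_
    have h1 : ∀ a ∈ S, ‖(c a : ℂ) * Complex.exp (θ a * z)‖ ≤ |c a| * Real.exp (E * (22 * n)) := by
      intro a ha
      rw [norm_mul, Complex.norm_real, Real.norm_eq_abs, Complex.norm_exp]
      gcongr
      rw [Complex.re_ofReal_mul]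
      have h2 := (Complex.abs_re_le_norm z).trans_eq hz
      have h3 : z.re ≤ 22 * n := (le_abs_self _).trans h2
      calc θ a * z.re ≤ θ a * (22 * n) := mul_le_mul_of_nonneg_left h3 (hθ0 a ha)
        _ ≤ _ := by
          have := hθE a ha
          gcongr
    refine (Finset.sum_le_sum h1).trans ?_
    rw [← Finset.sum_mul]
    gcongr

theorem MomentsVanish.affine {α : Type*} {S : Finset α} {X Y X' Y' : α → ℝ} {T : ℕ} {w : α → ℝ}
    (h : MomentsVanish S X Y T w) (u₁ v₁ r₁ u₂ v₂ r₂ : ℝ)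
    (hX : ∀ a, X' a = u₁ * X a + v₁ * Y a + r₁) (hY : ∀ a, Y' a = u₂ * X a + v₂ * Y a + r₂) :
    MomentsVanish S X' Y' T w := by
  intro i j hij
  simp only [hX, hY]
  exact ((h.mul_affine_pow u₁ v₁ r₁ i).mul_affine_pow u₂ v₂ r₂ j).sum_eq_zero (by omega)

/-- The logarithms of `2`, `3` and the golden ratio. -/
noncomputable def logs : Fin 3 → ℝ := ![Real.log 2, Real.log 3, Real.log Real.goldenRatio]

/-- The linear form with coefficients `logs`. -/
noncomputable def logForm (μ : Fin 3 → ℕ) : ℝ := ∑ i, μ i * logs i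

/-- The integer linear form with coefficients `u`. -/
def intForm (u : Fin 3 → ℤ) (μ : Fin 3 → ℕ) : ℤ := ∑ i, u i * μ i

/-- The cube of exponents `0 ≤ μ i < L`. -/
def expBox (L : ℕ) : Finset (Fin 3 → ℕ) := Fintype.piFinset fun _ => Finset.range L

theorem mem_expBox {L : ℕ} {μ : Fin 3 → ℕ} : μ ∈ expBox L ↔ ∀ i, μ i < L := by
  simp [expBox]

theorem card_expBox (L : ℕ) : (expBox L).card = L ^ 3 := by
  simp [expBox]

theorem logs_nonneg (i : Fin 3) : 0 ≤ logs i := by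
  fin_cases i
  · exact Real.log_nonneg (by norm_num)
  · exact Real.log_nonneg (by norm_num)
  · exact Real.log_nonneg Real.one_lt_goldenRatio.le

theorem sum_logs_le : ∑ i, logs i ≤ 5 / 2 := by
  have h1 : Real.log Real.goldenRatio ≤ Real.log 2 :=
    Real.log_le_log Real.goldenRatio_pos Real.goldenRatio_lt_two.le
  have h2 : Real.log 3 ≤ Real.log 4 := Real.log_le_log (by norm_num) (by norm_num)
  have h3 : Real.log 4 = 2 * Real.log 2 := by
    rw [show (4 : ℝ) = 2 ^ 2 by norm_num, Real.log_pow]; norm_num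
  have h4 : Real.log 3 ≤ 1.1 := by
    have := abs_le.mp Real.log_three_near_10
    norm_num at this ⊢
    linarith [this.2]
  have := Real.log_two_lt_d9
  simp only [logs, Fin.sum_univ_three, Matrix.cons_val]
  norm_num at h4 ⊢
  linarith

theorem logForm_nonneg (μ : Fin 3 → ℕ) : 0 ≤ logForm μ :=
  Finset.sum_nonneg fun i _ => mul_nonneg (Nat.cast_nonneg _) (logs_nonneg i)

theorem logForm_le {L : ℕ} {μ : Fin 3 → ℕ} (h : μ ∈ expBox L) : logForm μ ≤ 5 / 2 * L := by
  rw [mem_expBox] at h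
  calc logForm μ ≤ ∑ i, (L : ℝ) * logs i := Finset.sum_le_sum fun i _ =>
        mul_le_mul_of_nonneg_right (by exact_mod_cast (h i).le) (logs_nonneg i)
    _ = L * ∑ i, logs i := by rw [Finset.mul_sum]
    _ ≤ L * (5 / 2) := by gcongr; exact sum_logs_le
    _ = _ := by ring

theorem logForm_double (ν ε : Fin 3 → ℕ) :
    logForm (fun i => 2 * ν i + ε i) = 2 * logForm ν + logForm ε := by
  simp only [logForm, Finset.mul_sum, ← Finset.sum_add_distrib]
  refine Finset.sum_congr rfl fun i _ => ?_
  push_cast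
  ring

theorem intForm_double (u : Fin 3 → ℤ) (ν ε : Fin 3 → ℕ) :
    intForm u (fun i => 2 * ν i + ε i) = 2 * intForm u ν + intForm u ε := by
  simp only [intForm, Finset.mul_sum, ← Finset.sum_add_distrib]
  refine Finset.sum_congr rfl fun i _ => ?_
  push_cast
  ring

theorem realRoot_eq_exp (i : Fin 3) : realRoot i = Real.exp (logs i / 2) := by
  have key : ∀ x : ℝ, 0 < x → √x = Real.exp (Real.log x / 2) := by
    intro x hx
    rw [Real.exp_half, Real.exp_log hx]
  fin_cases i
  · exact key _ two_pos
  · exact key _ three_pos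
  · exact key _ Real.goldenRatio_pos

theorem prod_realRoot_pow (μ : Fin 3 → ℕ) (k : ℕ) :
    ∏ i, realRoot i ^ (μ i * k) = Real.exp (logForm μ * (k / 2)) := by
  simp only [realRoot_eq_exp, ← Real.exp_nat_mul, ← Real.exp_sum, logForm, Finset.sum_mul]
  congr 1
  refine Finset.sum_congr rfl fun i _ => ?_
  push_cast
  ring

/-- The coefficients `p` form a nonzero exponential polynomial of exponents below `L`, with
coefficients at most `P`, vanishing to order `T` along two integer forms at `n` odd integers. -/
structure AuxiliaryFunction (u v : Fin 3 → ℤ) (p : (Fin 3 → ℕ) → ℤ) (P : ℝ) (L T n : ℕ) :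
    Prop where
  exists_ne : ∃ μ ∈ expBox L, p μ ≠ 0
  abs_le : ∀ μ ∈ expBox L, |(p μ : ℝ)| ≤ P
  vanish : ∀ s < n, MomentsVanish (expBox L) (fun μ => (intForm u μ : ℝ))
    (fun μ => (intForm v μ : ℝ)) T fun μ => p μ * Real.exp (logForm μ * (2 * s + 1))

theorem AuxiliaryFunction.descend {u v : Fin 3 → ℤ} {p : (Fin 3 → ℕ) → ℤ} {P : ℝ} {L K n : ℕ}
    (hp : AuxiliaryFunction u v p P (2 * L) (2 * K) n) (hn : 1 ≤ n) (hK : 1 ≤ K)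
    {B A e κ₁ κ₂ : ℝ} (hB : 1 ≤ B) (hBu : ∀ μ ∈ expBox (2 * L), |(intForm u μ : ℝ)| ≤ B)
    (hBv : ∀ μ ∈ expBox (2 * L), |(intForm v μ : ℝ)| ≤ B) (hA : (2 * L) ^ 3 * (P * B ^ K) ≤ A)
    (he0 : 0 ≤ e) (he1 : e ≤ 1)
    (he : ∀ μ ∈ expBox (2 * L), |logForm μ - (κ₁ * intForm u μ + κ₂ * intForm v μ)| ≤ e)
    (hnum : (A * Real.exp (5 * L * (22 * n)) / 10 ^ (n * K) + 2 * n *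
      (A * Real.exp (5 * L * (2 * n)) * (e * Real.exp (5 * L + 1))) * 261 ^ (n * K)) *
      (A * Real.exp (5 * L * (2 * n))) ^ 15 < 1) :
    ∃ ε : Fin 3 → ℕ, AuxiliaryFunction u v (fun ν => p fun i => 2 * ν i + ε i) P L K (2 * n) := by
  obtain ⟨μ₀, hμ₀, hpμ₀⟩ := hp.exists_ne
  have hP : 0 ≤ P := (abs_nonneg _).trans (hp.abs_le μ₀ hμ₀)
  set ε : Fin 3 → ℕ := fun i => μ₀ i % 2 with hε
  have hmem : ∀ ν ∈ expBox L, (fun i => 2 * ν i + ε i) ∈ expBox (2 * L) := by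
    intro ν hν
    rw [mem_expBox] at hν ⊢
    intro i
    have := hν i
    have : ε i < 2 := Nat.mod_lt _ (by norm_num)
    omega
  refine ⟨ε, ⟨⟨fun i => μ₀ i / 2, ?_, ?_⟩, fun ν hν => hp.abs_le _ (hmem ν hν), fun s hs => ?_⟩⟩
  · rw [mem_expBox] at hμ₀ ⊢
    intro i
    have := hμ₀ i
    omega
  · convert hpμ₀ using 2
    funext i
    simp only [hε]
    omega
  have hvan : MomentsVanish (expBox L) (fun ν => (intForm u (fun i => 2 * ν i + ε i) : ℝ))
      (fun ν => (intForm v (fun i => 2 * ν i + ε i) : ℝ)) K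
      fun ν => (p fun i => 2 * ν i + ε i) * Real.exp (logForm ν * (2 * s + 1)) := by
    intro i j hij
    set c : (Fin 3 → ℕ) → ℤ := fun μ => p μ * intForm u μ ^ i * intForm v μ ^ j with hc
    have hcle : ∀ μ ∈ expBox (2 * L), |(c μ : ℝ)| ≤ P * B ^ K := by
      intro μ hμ
      have h1 : B ^ i * B ^ j ≤ B ^ K := by
        rw [← pow_add]; exact pow_le_pow_right₀ hB hij.le
      simp only [hc]
      push_cast
      rw [abs_mul, abs_mul, abs_pow, abs_pow, mul_assoc]
      have h2 := hp.abs_le μ hμ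
      have h3 := hBu μ hμ
      have h4 := hBv μ hμ
      calc _ ≤ P * (B ^ i * B ^ j) := by gcongr
        _ ≤ _ := by gcongr
    have hcA : ∑ μ ∈ expBox (2 * L), |(c μ : ℝ)| ≤ A := by
      refine (Finset.sum_le_card_nsmul _ _ _ hcle).trans ?_
      rw [card_expBox, nsmul_eq_mul]
      push_cast
      exact hA
    have hA0 : 0 ≤ A := (Finset.sum_nonneg fun _ _ => abs_nonneg _).trans hcA
    have hw : (2 * s + 1 : ℝ) / 2 ≤ 2 * n := by
      have : (s : ℝ) + 1 ≤ 2 * n := by exact_mod_cast hs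
      linarith
    have hsmall := abs_exp_sum_le_of_momentsVanish (expBox (2 * L)) (fun μ => (intForm u μ : ℝ))
      (fun μ => (intForm v μ : ℝ)) logForm (fun μ => (c μ : ℝ)) (κ₁ := κ₁) (κ₂ := κ₂)
      (E := 5 * L) hn hK (fun μ _ => logForm_nonneg μ)
      (fun μ hμ => (logForm_le hμ).trans_eq (by push_cast; ring)) (by positivity) he1 he0 he hcA
      (fun s' hs' i' j' hij' => by
        have := hp.vanish s' hs' (i + i') (j + j') (by omega)
        refine Eq.trans (Finset.sum_congr rfl fun μ _ => ?_) this
        simp only [hc]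
        push_cast
        ring) (w := (2 * s + 1) / 2) (by positivity) hw
    have hprod : ∀ μ, ∏ l, realRoot l ^ (μ l * (2 * s + 1)) =
        Real.exp (logForm μ * ((2 * s + 1) / 2)) := by
      intro μ
      rw [prod_realRoot_pow]
      push_cast
      rfl
    have h0 := goldenKummer_sum_eq_zero (expBox (2 * L)) c (fun μ l => μ l * (2 * s + 1))
      (A * Real.exp (5 * L * (2 * n))) (by
        have h1 : ∀ μ ∈ expBox (2 * L), |(c μ : ℝ)| * ∏ l, realRoot l ^ (μ l * (2 * s + 1)) ≤
            |(c μ : ℝ)| * Real.exp (5 * L * (2 * n)) := by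
          intro μ hμ
          rw [hprod]
          have h2 : logForm μ ≤ 5 * L := (logForm_le hμ).trans_eq (by push_cast; ring)
          have := logForm_nonneg μ
          gcongr
        refine (Finset.sum_le_sum h1).trans ?_
        rw [← Finset.sum_mul]
        gcongr) (by
        simp only [hprod]
        refine lt_of_le_of_lt ?_ hnum
        gcongr)
    have h1 := goldenKummer_component _ _ _ h0 (e := ε) fun l => Nat.mod_lt _ (by norm_num)
    have h2 : ∑ ν ∈ expBox L, (c fun l => 2 * ν l + ε l) *
        Real.exp (logForm (fun l => 2 * ν l + ε l) * ((2 * s + 1) / 2)) = 0 := by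
      rw [← h1]
      refine Finset.sum_bij (fun ν _ => fun l => 2 * ν l + ε l) (fun ν hν => ?_)
        (fun ν _ ν' _ h => ?_) (fun μ hμ => ?_) fun ν _ => ?_
      · rw [Finset.mem_filter]
        refine ⟨hmem ν hν, fun l => ?_⟩
        have : ε l < 2 := Nat.mod_lt _ (by norm_num)
        rw [show (2 * ν l + ε l) * (2 * s + 1) = ε l + 2 * (ν l * (2 * s + 1) + ε l * s) by ring]
        omega
      · funext l
        have := congrFun h l
        omega
      · rw [Finset.mem_filter, mem_expBox] at hμ
        have h3 : ∀ l, μ l % 2 = ε l := by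
          intro l
          have := hμ.2 l
          rw [show μ l * (2 * s + 1) = μ l + 2 * (μ l * s) by ring] at this
          omega
        refine ⟨fun l => μ l / 2, ?_, ?_⟩
        · rw [mem_expBox]
          intro l
          have := hμ.1 l
          omega
        · funext l
          have := h3 l
          dsimp only
          omega
      · rw [hprod]
    have h3 : Real.exp (logForm ε * ((2 * s + 1) / 2)) * ∑ ν ∈ expBox L,
        (p fun l => 2 * ν l + ε l) * Real.exp (logForm ν * (2 * s + 1)) *
          (intForm u (fun l => 2 * ν l + ε l) : ℝ) ^ i *
          (intForm v (fun l => 2 * ν l + ε l) : ℝ) ^ j = 0 := by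
      rw [← h2, Finset.mul_sum]
      refine Finset.sum_congr rfl fun ν _ => ?_
      rw [logForm_double, show (2 * logForm ν + logForm ε) * ((2 * s + 1 : ℝ) / 2) =
        logForm ε * ((2 * s + 1) / 2) + logForm ν * (2 * s + 1) by ring, Real.exp_add]
      simp only [hc]
      push_cast
      ring
    exact (mul_eq_zero.mp h3).resolve_left (Real.exp_pos _).ne'
  refine hvan.affine (1 / 2) 0 (-(intForm u ε : ℝ) / 2) 0 (1 / 2) (-(intForm v ε : ℝ) / 2)
    (fun ν => ?_) fun ν => ?_
  · rw [intForm_double u]; push_cast; ring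
  · rw [intForm_double v]; push_cast; ring

theorem exists_small_int_solution {α β : Type*} [Fintype α] [Fintype β] (A : α → β → ℤ) {M : ℝ}
    (hM : 1 ≤ M) (hA : ∀ i j, |(A i j : ℝ)| ≤ M) (hα : 0 < Fintype.card α)
    (hαβ : 5 * Fintype.card α ≤ Fintype.card β) :
    ∃ t : β → ℤ, t ≠ 0 ∧ (∀ i, ∑ j, A i j * t j = 0) ∧
      ∀ j, |(t j : ℝ)| ≤ (Fintype.card β * M) ^ (1 / 4 : ℝ) := by
  let _ : SeminormedAddCommGroup (Matrix α β ℤ) := Matrix.seminormedAddCommGroup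
  obtain ⟨t, ht0, ht, htn⟩ := Int.Matrix.exists_ne_zero_int_vec_norm_le (Matrix.of A)
    (by omega) hα
  have hAM : ‖Matrix.of A‖ ≤ M :=
    (Matrix.norm_le_iff (by linarith)).mpr fun i j => by
      rw [Int.norm_eq_abs]; exact hA i j
  have h5 : 5 * (Fintype.card α : ℝ) ≤ Fintype.card β := by exact_mod_cast hαβ
  have hα' : (0 : ℝ) < Fintype.card α := by exact_mod_cast hα
  have h1β : (1 : ℝ) ≤ Fintype.card β := by exact_mod_cast (by omega : 1 ≤ Fintype.card β)
  refine ⟨t, ht0, fun i => congrFun ht i, fun j => ?_⟩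
  rw [← Int.norm_eq_abs]
  refine ((norm_le_pi_norm t j).trans htn).trans ?_
  refine (Real.rpow_le_rpow (by positivity)
    (mul_le_mul_of_nonneg_left (max_le hM hAM) (by linarith)) ?_).trans
    (Real.rpow_le_rpow_of_exponent_le (one_le_mul_of_one_le_of_one_le h1β hM) ?_)
  · exact div_nonneg hα'.le (by linarith)
  · rw [div_le_div_iff₀ (by linarith) (by norm_num)]
    linarith

theorem fib_add_le_goldenRatio_pow (m : ℕ) (b : Fin 2) :
    (Nat.fib (m + b) : ℝ) ≤ Real.goldenRatio ^ m := by
  have h : (Nat.fib (m + 1) : ℝ) ≤ Real.goldenRatio ^ m := by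
    rw [← Real.fib_succ_sub_goldenConj_mul_fib]
    have := mul_nonneg (neg_nonneg.mpr Real.goldenConj_neg.le) (Nat.cast_nonneg (Nat.fib m))
    linarith
  refine le_trans ?_ h
  exact_mod_cast Nat.fib_mono (by omega)

theorem exp_logForm_mul_natCast (μ : Fin 3 → ℕ) (k : ℕ) :
    Real.exp (logForm μ * k) =
      2 ^ (μ 0 * k) * 3 ^ (μ 1 * k) * Real.goldenRatio ^ (μ 2 * k) := by
  have h := prod_realRoot_pow μ (2 * k)
  rw [show ((2 * k : ℕ) : ℝ) / 2 = k by push_cast; ring] at h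
  have h3 : ∀ x : ℝ, 0 ≤ x → ∀ m : ℕ, √x ^ (m * (2 * k)) = x ^ (m * k) := by
    intro x hx m
    rw [show m * (2 * k) = 2 * (m * k) by ring, pow_mul, Real.sq_sqrt hx]
  rw [← h, Fin.prod_univ_three, ← h3 2 (by norm_num), ← h3 3 (by norm_num),
    ← h3 _ Real.goldenRatio_pos.le]
  rfl

theorem exists_auxiliaryFunction (u v : Fin 3 → ℤ) {B : ℝ} {L T n : ℕ} (hB : 1 ≤ B) (hL : 1 ≤ L)
    (hT : 1 ≤ T) (hn : 1 ≤ n) (hBu : ∀ μ ∈ expBox L, |(intForm u μ : ℝ)| ≤ B)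
    (hBv : ∀ μ ∈ expBox L, |(intForm v μ : ℝ)| ≤ B) (hcard : 5 * (2 * T ^ 2 * n) ≤ L ^ 3) :
    ∃ p, AuxiliaryFunction u v p
      ((L ^ 3 * (B ^ T * Real.exp (5 * L * n))) ^ (1 / 4 : ℝ)) L T n := by
  set A : Fin T × Fin T × Fin n × Fin 2 → expBox L → ℤ := fun a μ =>
    if (a.1 : ℕ) + a.2.1 < T then
      intForm u μ ^ (a.1 : ℕ) * intForm v μ ^ (a.2.1 : ℕ) *
        ((2 ^ (μ.1 0 * (2 * a.2.2.1 + 1)) * 3 ^ (μ.1 1 * (2 * a.2.2.1 + 1)) *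
          Nat.fib (μ.1 2 * (2 * a.2.2.1 + 1) + a.2.2.2) : ℕ) : ℤ)
    else 0 with hA
  have hM : 1 ≤ B ^ T * Real.exp (5 * L * n) :=
    one_le_mul_of_one_le_of_one_le (one_le_pow₀ hB) (Real.one_le_exp (by positivity))
  have hAM : ∀ a μ, |(A a μ : ℝ)| ≤ B ^ T * Real.exp (5 * L * n) := by
    rintro ⟨i, j, s, b⟩ μ
    simp only [hA]
    split_ifs with hij
    · have h1 : B ^ (i : ℕ) * B ^ (j : ℕ) ≤ B ^ T := by
        rw [← pow_add]; exact pow_le_pow_right₀ hB hij.le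
      have h2 : (2 : ℝ) ^ (μ.1 0 * (2 * s + 1)) * 3 ^ (μ.1 1 * (2 * s + 1)) *
          Nat.fib (μ.1 2 * (2 * s + 1) + b) ≤ Real.exp (5 * L * n) := by
        have h3 : logForm μ * ((2 * s + 1 : ℕ) : ℝ) ≤ 5 * L * n := by
          have hs : ((2 * s + 1 : ℕ) : ℝ) ≤ 2 * n := by
            exact_mod_cast (by omega : 2 * (s : ℕ) + 1 ≤ 2 * n)
          calc _ ≤ 5 / 2 * L * (2 * n : ℝ) :=
                mul_le_mul (logForm_le μ.2) hs (Nat.cast_nonneg _) (by positivity)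
            _ = _ := by ring
        refine le_trans ?_ (Real.exp_le_exp.mpr h3)
        rw [exp_logForm_mul_natCast]
        gcongr
        exact fib_add_le_goldenRatio_pow _ _
      have h4 := hBu μ μ.2
      have h5 := hBv μ μ.2
      push_cast
      rw [abs_mul, abs_mul, abs_pow, abs_pow]
      rw [abs_of_nonneg (a := (2 : ℝ) ^ (μ.1 0 * (2 * s + 1 : ℕ)) * _ * _) (by positivity)]
      calc _ ≤ B ^ (i : ℕ) * B ^ (j : ℕ) * Real.exp (5 * L * n) := by gcongr
        _ ≤ _ := by gcongr
    · rw [Int.cast_zero, abs_zero]; linarith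
  have : NeZero T := ⟨by omega⟩
  have : NeZero n := ⟨by omega⟩
  obtain ⟨t, ht0, ht, htM⟩ := exists_small_int_solution A hM hAM Fintype.card_pos (by
    simp only [Fintype.card_prod, Fintype.card_fin, Fintype.card_coe, card_expBox]
    refine le_trans (le_of_eq ?_) hcard
    ring)
  classical
  refine ⟨fun μ => if h : μ ∈ expBox L then t ⟨μ, h⟩ else 0, ⟨?_, fun μ hμ => ?_, ?_⟩⟩
  · obtain ⟨μ, hμ⟩ := Function.ne_iff.mp ht0
    exact ⟨μ, μ.2, by simpa using hμ⟩
  · rw [dif_pos hμ]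
    refine (htM ⟨μ, hμ⟩).trans_eq ?_
    rw [Fintype.card_coe, card_expBox]
    push_cast
    rfl
  · intro s hs i j hij
    have hrow : ∀ b : Fin 2, ∑ μ : expBox L, (intForm u μ : ℝ) ^ i * (intForm v μ : ℝ) ^ j *
        (2 ^ (μ.1 0 * (2 * s + 1)) * 3 ^ (μ.1 1 * (2 * s + 1)) *
          (Nat.fib (μ.1 2 * (2 * s + 1) + b) : ℝ)) * t μ = 0 := by
      intro b
      have := ht (⟨i, by omega⟩, ⟨j, by omega⟩, ⟨s, hs⟩, b)
      simp only [hA, if_pos hij] at this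
      exact_mod_cast this
    rw [← Finset.sum_coe_sort]
    calc _ = ∑ μ : expBox L, (intForm u μ : ℝ) ^ i * (intForm v μ : ℝ) ^ j *
        (2 ^ (μ.1 0 * (2 * s + 1)) * 3 ^ (μ.1 1 * (2 * s + 1)) *
          (Nat.fib (μ.1 2 * (2 * s + 1) + (1 : Fin 2)) : ℝ)) * t μ - Real.goldenConj *
        ∑ μ : expBox L, (intForm u μ : ℝ) ^ i * (intForm v μ : ℝ) ^ j *
        (2 ^ (μ.1 0 * (2 * s + 1)) * 3 ^ (μ.1 1 * (2 * s + 1)) *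
          (Nat.fib (μ.1 2 * (2 * s + 1) + (0 : Fin 2)) : ℝ)) * t μ := by
          rw [Finset.mul_sum, ← Finset.sum_sub_distrib]
          refine Finset.sum_congr rfl fun μ _ => ?_
          beta_reduce
          have h1 := exp_logForm_mul_natCast μ (2 * s + 1)
          rw [← Real.fib_succ_sub_goldenConj_mul_fib] at h1
          push_cast at h1
          rw [dif_pos μ.2, h1, Fin.val_one, Fin.val_zero, Nat.add_zero]
          ring_nf
      _ = 0 := by rw [hrow, hrow]; ring

theorem expBox_mono {L L' : ℕ} (h : L ≤ L') : expBox L ⊆ expBox L' := fun _ hμ =>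
  mem_expBox.mpr fun i => (mem_expBox.mp hμ i).trans_le h

/-- The integer form `b q * μ (q + t) - b (q + t) * μ q`. -/
def crossForm (b : Fin 3 → ℤ) (q t : Fin 3) : Fin 3 → ℤ :=
  fun i => (if i = q + t then b q else 0) - if i = q then b (q + t) else 0

theorem intForm_crossForm (b : Fin 3 → ℤ) (q t : Fin 3) (μ : Fin 3 → ℕ) :
    intForm (crossForm b q t) μ = b q * μ (q + t) - b (q + t) * μ q := by
  simp [intForm, crossForm, sub_mul, ite_mul, Finset.sum_sub_distrib]

theorem abs_intForm_crossForm_le {b : Fin 3 → ℤ} {H : ℝ} (hb : ∀ i, |(b i : ℝ)| ≤ H) (q t : Fin 3)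
    {L : ℕ} {μ : Fin 3 → ℕ} (hμ : μ ∈ expBox L) :
    |(intForm (crossForm b q t) μ : ℝ)| ≤ 2 * H * L := by
  have hH : 0 ≤ H := (abs_nonneg _).trans (hb 0)
  have h : ∀ i j, |(b i : ℝ) * μ j| ≤ H * L := by
    intro i j
    rw [abs_mul, Nat.abs_cast]
    have h1 : (μ j : ℝ) ≤ L := by exact_mod_cast (mem_expBox.mp hμ j).le
    have h2 := hb i
    gcongr
  rw [intForm_crossForm]
  push_cast
  refine (abs_sub _ _).trans ?_
  linarith [h q (q + t), h (q + t) q]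

theorem logForm_sub_crossForm {b : Fin 3 → ℤ} {q : Fin 3} (hq : b q ≠ 0) (μ : Fin 3 → ℕ) :
    logForm μ - (logs (q + 1) / b q * intForm (crossForm b q 1) μ +
      logs (q + 2) / b q * intForm (crossForm b q 2) μ) = μ q * (∑ i, b i * logs i) / b q := by
  have hq' : (b q : ℝ) ≠ 0 := by exact_mod_cast hq
  have h : ∀ f : Fin 3 → ℝ, ∑ i, f i = f q + f (q + 1) + f (q + 2) := by
    intro f
    rw [Fin.sum_univ_three]
    fin_cases q
    · rfl
    · change _ = f 1 + f 2 + f 0; ring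
    · change _ = f 2 + f 0 + f 1; ring
  rw [logForm, h, h, intForm_crossForm, intForm_crossForm]
  push_cast
  field_simp
  ring

theorem descent_estimate {A D : ℝ} {Y : ℕ} (hY : 1 ≤ Y) (hA0 : 0 ≤ A) (hA : A ≤ Real.exp (26 * Y))
    (hD0 : 0 ≤ D) (hD : D ≤ Real.exp (-(2192 * Y))) :
    (A * Real.exp (11 * (5 * Y)) / 10 ^ (256 * Y) + A * Real.exp (5 * Y) * D * 261 ^ (256 * Y)) *
      (A * Real.exp (5 * Y)) ^ 15 < 1 := by
  have hY' : (1 : ℝ) ≤ Y := by exact_mod_cast hY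
  have h10 : Real.exp (588 * Y) ≤ 10 ^ (256 * Y) := by
    have h1 : Real.exp (23 / 10) ≤ 10 := by
      have h2 : Real.exp (23 / 10) ^ 10 ≤ 10 ^ 10 := by
        rw [← Real.exp_nat_mul, show ((10 : ℕ) : ℝ) * (23 / 10) = ((23 : ℕ) : ℝ) * 1 by norm_num,
          Real.exp_nat_mul]
        calc Real.exp 1 ^ 23 ≤ 2.7182818286 ^ 23 := by
              gcongr; exact Real.exp_one_lt_d9.le
          _ ≤ _ := by norm_num
      exact le_of_pow_le_pow_left₀ (by norm_num) (by norm_num) h2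
    calc _ ≤ Real.exp ((256 * Y : ℕ) * (23 / 10)) := by
          apply Real.exp_le_exp.mpr; push_cast; linarith
      _ = Real.exp (23 / 10) ^ (256 * Y) := Real.exp_nat_mul _ _
      _ ≤ _ := by gcongr
  have h261 : (261 : ℝ) ^ (256 * Y) ≤ Real.exp (1536 * Y) := by
    have h1 : (261 : ℝ) ≤ Real.exp 6 := by
      rw [show (6 : ℝ) = ((6 : ℕ) : ℝ) * 1 by norm_num, Real.exp_nat_mul]
      calc (261 : ℝ) ≤ 2.7 ^ 6 := by norm_num
        _ ≤ _ := by gcongr; linarith [Real.exp_one_gt_d9]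
    calc _ ≤ Real.exp 6 ^ (256 * Y) := by gcongr
      _ = Real.exp ((256 * Y : ℕ) * 6) := (Real.exp_nat_mul _ _).symm
      _ = _ := by congr 1; push_cast; ring
  have hhalf : Real.exp (-(42 * Y)) < 1 / 2 := by
    rw [Real.exp_neg, inv_lt_comm₀ (Real.exp_pos _) (by norm_num)]
    have := Real.add_one_le_exp (42 * (Y : ℝ))
    linarith
  have hAE : (A * Real.exp (5 * Y)) ^ 15 ≤ Real.exp (465 * Y) := by
    calc _ ≤ (Real.exp (26 * Y) * Real.exp (5 * Y)) ^ 15 := by gcongr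
      _ = _ := by rw [← Real.exp_add, ← Real.exp_nat_mul]; congr 1; push_cast; ring
  have h1 : A * Real.exp (11 * (5 * Y)) / 10 ^ (256 * Y) ≤ Real.exp (-(507 * Y)) := by
    calc _ ≤ Real.exp (26 * Y) * Real.exp (11 * (5 * Y)) / Real.exp (588 * Y) := by gcongr
      _ = Real.exp (-(507 * Y)) := by rw [← Real.exp_add, ← Real.exp_sub]; congr 1; ring
  have h2 : A * Real.exp (5 * Y) * D * 261 ^ (256 * Y) ≤ Real.exp (-(507 * Y)) := by
    calc _ ≤ Real.exp (26 * Y) * Real.exp (5 * Y) * Real.exp (-(2192 * Y)) *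
          Real.exp (1536 * Y) := by gcongr
      _ = Real.exp (-(625 * Y)) := by
          rw [← Real.exp_add, ← Real.exp_add, ← Real.exp_add]; congr 1; ring
      _ ≤ _ := Real.exp_le_exp.mpr (by linarith)
  calc _ ≤ (Real.exp (-(507 * Y)) + Real.exp (-(507 * Y))) * Real.exp (465 * Y) := by
        gcongr
    _ = 2 * Real.exp (-(42 * Y)) := by
        rw [← two_mul, mul_assoc, ← Real.exp_add]; congr 2; ring
    _ < 1 := by linarith

theorem AuxiliaryFunction.descend_all {u v : Fin 3 → ℤ} {p : (Fin 3 → ℕ) → ℤ} {P : ℝ} {J n : ℕ}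
    (hp : AuxiliaryFunction u v p P (2 ^ J) (512 * 2 ^ J) n) (hn : 1 ≤ n)
    {B A δ κ₁ κ₂ : ℝ} (hB : 1 ≤ B) (hBu : ∀ μ ∈ expBox (2 ^ J), |(intForm u μ : ℝ)| ≤ B)
    (hBv : ∀ μ ∈ expBox (2 ^ J), |(intForm v μ : ℝ)| ≤ B)
    (hAP : (2 ^ J) ^ 3 * (P * B ^ (256 * 2 ^ J)) ≤ A) (hA : A ≤ Real.exp (26 * (2 ^ J * n : ℕ)))
    (hδ0 : 0 ≤ δ) (hδ : δ ≤ Real.exp (-(2200 * (2 ^ J * n : ℕ))))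
    (he : ∀ μ ∈ expBox (2 ^ J),
      |logForm μ - (κ₁ * intForm u μ + κ₂ * intForm v μ)| ≤ 2 ^ J * δ) :
    ∀ k ≤ J, ∃ p', AuxiliaryFunction u v p' P (2 ^ (J - k)) (512 * 2 ^ (J - k)) (2 ^ k * n) := by
  intro k
  induction k with
  | zero => exact fun _ => ⟨p, by simpa using hp⟩
  | succ k ih =>
    intro hk
    obtain ⟨p', hp'⟩ := ih (by omega)
    have hP : 0 ≤ P := by
      obtain ⟨μ, hμ, -⟩ := hp.exists_ne
      exact (abs_nonneg _).trans (hp.abs_le μ hμ)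
    obtain ⟨l, rfl⟩ : ∃ l, J = l + 1 + k := ⟨J - (k + 1), by omega⟩
    rw [show l + 1 + k - k = l + 1 by omega] at hp'
    rw [show l + 1 + k - (k + 1) = l by omega]
    set Y : ℕ := 2 ^ (l + 1 + k) * n with hY
    set L : ℕ := 2 ^ l with hL
    have hL1 : 1 ≤ L := Nat.one_le_two_pow
    have hk1 : 1 ≤ 2 ^ k := Nat.one_le_two_pow
    have hYL : Y = 2 * (L * (2 ^ k * n)) := by rw [hY, hL]; ring
    have hsub : 2 * L ≤ 2 ^ (l + 1 + k) := by
      rw [hL, ← pow_succ']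
      exact Nat.pow_le_pow_right two_pos (by omega)
    have hYJ : 2 ^ (l + 1 + k) ≤ Y := by rw [hY]; exact Nat.le_mul_of_pos_right _ hn
    have hYn : 2 * (2 ^ k * n) ≤ Y := by
      rw [hYL]; exact Nat.mul_le_mul_left _ (Nat.le_mul_of_pos_left _ hL1)
    have hY1 : 1 ≤ Y := Nat.one_le_two_pow.trans hYJ
    have hmono := expBox_mono hsub
    have hYexp : (Y : ℝ) ≤ Real.exp Y := by linarith [Real.add_one_le_exp (Y : ℝ)]
    have hJexp : (2 : ℝ) ^ (l + 1 + k) ≤ Real.exp Y :=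
      le_trans (by exact_mod_cast hYJ) hYexp
    have hY1' : (1 : ℝ) ≤ Y := by exact_mod_cast hY1
    have hA0 : 0 ≤ A := le_trans (by positivity) hAP
    have heY : 2 ^ (l + 1 + k) * δ ≤ Real.exp (-(2199 * Y)) := by
      calc _ ≤ Real.exp Y * Real.exp (-(2200 * Y)) := by gcongr
        _ = _ := by rw [← Real.exp_add]; congr 1; ring
    have hnum := descent_estimate (A := A) (Y := Y)
      (D := 2 * (2 ^ k * n : ℕ) * (2 ^ (l + 1 + k) * δ * Real.exp (5 * L + 1))) hY1 hA0 hA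
      (by positivity) (by
        have h1 : (2 * (2 ^ k * n : ℕ) : ℝ) ≤ Real.exp Y := le_trans (by exact_mod_cast hYn) hYexp
        have h2 : Real.exp (5 * L + 1) ≤ Real.exp (6 * Y) := by
          apply Real.exp_le_exp.mpr
          have : (L : ℝ) ≤ Y := by exact_mod_cast (by omega : L ≤ Y)
          linarith
        calc _ ≤ Real.exp Y * (Real.exp (-(2199 * Y)) * Real.exp (6 * Y)) := by gcongr
          _ = Real.exp (-(2192 * Y)) := by
            rw [← Real.exp_add, ← Real.exp_add]; congr 1; ring)
    have hYr : (Y : ℝ) = 2 * (L * (2 ^ k * n : ℕ)) := by exact_mod_cast hYL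
    rw [pow_succ', ← hL, mul_left_comm] at hp'
    obtain ⟨ε, hε⟩ := hp'.descend (L := L) (K := 512 * L) (A := A)
      (e := 2 ^ (l + 1 + k) * δ) (κ₁ := κ₁) (κ₂ := κ₂) (B := B)
      (Nat.mul_pos hk1 hn)
      (by omega) hB (fun μ hμ => hBu μ (hmono hμ)) (fun μ hμ => hBv μ (hmono hμ)) (by
        refine le_trans ?_ hAP
        have h1 : (2 * L : ℝ) ≤ 2 ^ (l + 1 + k) := by exact_mod_cast hsub
        have h2 : 512 * L ≤ 256 * 2 ^ (l + 1 + k) := by omega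
        gcongr) (by positivity)
      (heY.trans (Real.exp_le_one_iff.mpr (by linarith))) (fun μ hμ => he μ (hmono hμ)) (by
        refine lt_of_eq_of_lt ?_ hnum
        rw [show 2 ^ k * n * (512 * L) = 256 * Y by rw [hYL]; ring,
          show (5 * L * (22 * (2 ^ k * n : ℕ)) : ℝ) = 11 * (5 * Y) by rw [hYr]; ring,
          show (5 * L * (2 * (2 ^ k * n : ℕ)) : ℝ) = 5 * Y by rw [hYr]; ring]
        ring)
    rw [show 2 ^ (k + 1) * n = 2 * (2 ^ k * n) by ring]
    exact ⟨_, hε⟩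

theorem AuxiliaryFunction.false_of_one {u v : Fin 3 → ℤ} {p : (Fin 3 → ℕ) → ℤ} {P : ℝ} {T n : ℕ}
    (hp : AuxiliaryFunction u v p P 1 T n) (hT : 0 < T) (hn : 0 < n) : False := by
  obtain ⟨μ, hμ, hpμ⟩ := hp.exists_ne
  have h1 : expBox 1 = {μ} := by
    rw [Finset.eq_singleton_iff_unique_mem]
    refine ⟨hμ, fun ν hν => funext fun i => ?_⟩
    have := mem_expBox.mp hμ i
    have := mem_expBox.mp hν i
    omega
  have := (hp.vanish 0 hn).sum_eq_zero hT
  rw [h1, Finset.sum_singleton] at this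
  exact hpμ (by exact_mod_cast (mul_eq_zero.mp this).resolve_right (Real.exp_pos _).ne')

/-- A lower bound for linear forms in `log 2`, `log 3` and the logarithm of the golden ratio. -/
theorem exp_neg_le_abs_sum_mul_logs {b : Fin 3 → ℤ} (hb0 : b ≠ 0) {h : ℝ} (hh : 35 ≤ h)
    (hb : ∀ i, |(b i : ℝ)| ≤ Real.exp h) :
    Real.exp (-(10 ^ 13 * h ^ 2)) ≤ |∑ i, b i * logs i| := by
  by_contra! hlt
  obtain ⟨q, hq⟩ := Function.ne_iff.mp hb0
  have hq : b q ≠ 0 := hq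
  set n : ℕ := ⌈28 * h⌉₊ with hn
  have hn1 : 28 * h ≤ n := Nat.le_ceil _
  have hn2 : (n : ℝ) < 28 * h + 1 := Nat.ceil_lt_add_one (by linarith)
  have hn980 : 980 ≤ n := by exact_mod_cast (by linarith : (980 : ℝ) ≤ n)
  set J : ℕ := Nat.log 2 (2621440 * n) + 1 with hJ
  have hJ1 : 2621440 * n < 2 ^ J := Nat.lt_pow_succ_log_self one_lt_two _
  have hJ2 : 2 ^ J ≤ 5242880 * n := by
    have := Nat.pow_log_le_self 2 (x := 2621440 * n) (by omega)
    rw [hJ, pow_succ]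
    omega
  set Y : ℕ := 2 ^ J * n with hY
  have hYr : (Y : ℝ) = 2 ^ J * n := by rw [hY]; push_cast; rfl
  have hYh : 2200 * (Y : ℝ) ≤ 10 ^ 13 * h ^ 2 := by
    have h1 : (2 : ℝ) ^ J ≤ 5242880 * n := by exact_mod_cast hJ2
    have h2 : (n : ℝ) ≤ 28.03 * h := by linarith
    calc 2200 * (Y : ℝ) ≤ 2200 * (5242880 * n * n) := by rw [hYr]; gcongr
      _ = 2200 * 5242880 * (n : ℝ) ^ 2 := by ring
      _ ≤ 2200 * 5242880 * (28.03 * h) ^ 2 := by gcongr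
      _ ≤ _ := by nlinarith [sq_nonneg h]
  set B : ℝ := 2 * Real.exp h * 2 ^ J with hBdef
  have hB1 : 1 ≤ B := by
    have h1 : (1 : ℝ) ≤ 2 ^ J := one_le_pow₀ (by norm_num)
    have h2 := Real.one_le_exp (by linarith : 0 ≤ h)
    nlinarith
  have hBn : B ≤ Real.exp (n / 16) := by
    have h1 : (2 : ℝ) ^ J ≤ 5242880 * (28 * h + 1) :=
      le_trans (b := 5242880 * (n : ℝ)) (by exact_mod_cast hJ2) (by gcongr)
    have h2 : (10 ^ 11 : ℝ) * (1 + 3 / 4 * (h - 35)) ≤ Real.exp (3 / 4 * h) := by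
      have h3 : (10 ^ 11 : ℝ) ≤ Real.exp (26 : ℕ) := by
        rw [← mul_one ((26 : ℕ) : ℝ), Real.exp_nat_mul]
        calc (10 ^ 11 : ℝ) ≤ 2.7 ^ 26 := by norm_num
          _ ≤ _ := by gcongr; linarith [Real.exp_one_gt_d9]
      calc _ ≤ Real.exp (26 : ℕ) * Real.exp (3 / 4 * (h - 35)) := by
            have := Real.add_one_le_exp (3 / 4 * (h - 35))
            gcongr
            linarith
        _ = Real.exp (26 + 3 / 4 * (h - 35)) := by rw [← Real.exp_add]; norm_num
        _ ≤ _ := Real.exp_le_exp.mpr (by linarith)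
    calc B = Real.exp h * (2 * 2 ^ J) := by rw [hBdef]; ring
      _ ≤ Real.exp h * Real.exp (3 / 4 * h) := by gcongr; linarith
      _ = Real.exp (7 / 4 * h) := by rw [← Real.exp_add]; congr 1; ring
      _ ≤ _ := Real.exp_le_exp.mpr (by linarith)
  have hbound : ∀ t, ∀ μ ∈ expBox (2 ^ J), |(intForm (crossForm b q t) μ : ℝ)| ≤ B := by
    intro t μ hμ
    refine (abs_intForm_crossForm_le hb q t hμ).trans_eq ?_
    push_cast
    rfl
  obtain ⟨p, hp⟩ := exists_auxiliaryFunction (crossForm b q 1) (crossForm b q 2) (B := B)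
    (L := 2 ^ J) (T := 512 * 2 ^ J) (n := n) hB1 Nat.one_le_two_pow
    (Nat.mul_pos (by norm_num) Nat.one_le_two_pow) (by omega) (hbound 1) (hbound 2) (by
      calc _ = 2621440 * n * (2 ^ J) ^ 2 := by ring
        _ ≤ 2 ^ J * (2 ^ J) ^ 2 := Nat.mul_le_mul_right _ hJ1.le
        _ = _ := by ring)
  have hBpow : ∀ m : ℕ, B ^ (m * 2 ^ J) ≤ Real.exp (m / 16 * Y) := by
    intro m
    calc _ ≤ Real.exp (n / 16) ^ (m * 2 ^ J) := by gcongr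
      _ = _ := by rw [← Real.exp_nat_mul, hYr]; congr 1; push_cast; ring
  have hL3 : ((2 ^ J : ℕ) : ℝ) ^ 3 ≤ Real.exp (1 / 10 * Y) := by
    have h1 : (2 : ℝ) ^ J * 30 ≤ Y := by
      rw [hYr]; gcongr; exact_mod_cast (by omega : 30 ≤ n)
    push_cast
    calc _ ≤ Real.exp (2 ^ J) ^ 3 := by
          gcongr; linarith [Real.add_one_le_exp ((2 : ℝ) ^ J)]
      _ = Real.exp ((3 : ℕ) * 2 ^ J) := (Real.exp_nat_mul _ _).symm
      _ ≤ _ := Real.exp_le_exp.mpr (by push_cast; linarith)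
  set P : ℝ := (((2 ^ J : ℕ) : ℝ) ^ 3 * (B ^ (512 * 2 ^ J) *
    Real.exp (5 * (2 ^ J : ℕ) * n))) ^ (1 / 4 : ℝ) with hP
  have hPY : P ≤ Real.exp (9.3 * Y) := by
    have h1 := hBpow 512
    calc P ≤ (Real.exp (1 / 10 * Y) * (Real.exp ((512 : ℕ) / 16 * Y) *
          Real.exp (5 * Y))) ^ (1 / 4 : ℝ) := by
          rw [hP, mul_assoc 5, show ((2 ^ J : ℕ) : ℝ) * n = Y by rw [hYr]; push_cast; rfl]
          gcongr
      _ = Real.exp (9.275 * Y) := by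
          rw [← Real.exp_add, ← Real.exp_add, ← Real.exp_mul]; congr 1; push_cast; ring
      _ ≤ _ := Real.exp_le_exp.mpr (by gcongr; norm_num)
  have hP0 : 0 ≤ P := by positivity
  obtain ⟨p', hp'⟩ := hp.descend_all (by omega) (κ₁ := logs (q + 1) / b q)
    (κ₂ := logs (q + 2) / b q) (δ := |∑ i, b i * logs i|) hB1 (hbound 1) (hbound 2) le_rfl (by
      have h1 := hBpow 256
      push_cast at hL3
      calc _ ≤ Real.exp (1 / 10 * Y) * (Real.exp (9.3 * Y) * Real.exp ((256 : ℕ) / 16 * Y)) := by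
            gcongr
        _ = Real.exp (25.4 * Y) := by
            rw [← Real.exp_add, ← Real.exp_add]; congr 1; push_cast; ring
        _ ≤ _ := Real.exp_le_exp.mpr (by gcongr; norm_num)) (abs_nonneg _)
    (hlt.le.trans (Real.exp_le_exp.mpr (neg_le_neg hYh))) (fun μ hμ => by
      rw [logForm_sub_crossForm hq, abs_div, abs_mul, Nat.abs_cast]
      have h1 : (1 : ℝ) ≤ |(b q : ℝ)| := by exact_mod_cast Int.one_le_abs hq
      have h2 : (μ q : ℝ) ≤ 2 ^ J := by exact_mod_cast (mem_expBox.mp hμ q).le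
      refine (div_le_self (by positivity) h1).trans ?_
      gcongr) J le_rfl
  rw [Nat.sub_self, pow_zero] at hp'
  exact hp'.false_of_one (by norm_num) (Nat.mul_pos Nat.one_le_two_pow (by omega))

theorem lucas_pos : ∀ n, 0 < lucas n
  | 0 => by norm_num [lucas]
  | 1 => by norm_num [lucas]
  | n + 2 => by rw [lucas]; exact add_pos (lucas_pos (n + 1)) (lucas_pos n)

theorem lucas_lt_lucas {m n : ℕ} (hmn : m < n) (hn : 2 ≤ n) : lucas m < lucas n := by
  induction n, hn using Nat.le_induction generalizing m with
  | base => interval_cases m <;> norm_num [lucas]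
  | succ n hn ih =>
    have h1 : lucas n < lucas (n + 1) := by
      obtain ⟨k, rfl⟩ : ∃ k, n = k + 1 := ⟨n - 1, by omega⟩
      rw [lucas]
      exact lt_add_of_pos_right _ (lucas_pos k)
    rcases Nat.lt_succ_iff_lt_or_eq.mp hmn with h | rfl
    · exact (ih h).trans h1
    · exact h1

theorem lucas_eq : ∀ n, (lucas n : ℝ) = Real.goldenRatio ^ n + Real.goldenConj ^ n
  | 0 => by norm_num [lucas]
  | 1 => by
    rw [pow_one, pow_one, Real.goldenRatio_add_goldenConj]
    norm_num [lucas]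
  | n + 2 => by
    rw [lucas, Int.cast_add, lucas_eq n, lucas_eq (n + 1), pow_add _ n 2, pow_add _ n 2,
      Real.goldenRatio_sq, Real.goldenConj_sq]
    ring

theorem goldenRatio_pow_eq_exp (n : ℕ) :
    Real.goldenRatio ^ n = Real.exp (n * Real.log Real.goldenRatio) := by
  rw [Real.exp_nat_mul, Real.exp_log Real.goldenRatio_pos]

theorem abs_goldenConj_pow_le_one (n : ℕ) : |Real.goldenConj ^ n| ≤ 1 := by
  rw [abs_pow]
  refine pow_le_one₀ (abs_nonneg _) (abs_le.mpr ⟨Real.neg_one_lt_goldenConj.le, ?_⟩)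
  linarith [Real.goldenConj_neg]

theorem two_fifths_le_log_goldenRatio : 2 / 5 ≤ Real.log Real.goldenRatio := by
  have h2 : Real.exp 2 ≤ Real.goldenRatio ^ 5 := by
    have h3 : Real.goldenRatio ^ 5 = 5 * Real.goldenRatio + 3 := by
      linear_combination (Real.goldenRatio ^ 3 + Real.goldenRatio ^ 2 + 2 * Real.goldenRatio + 3) *
        Real.goldenRatio_sq
    have h4 : Real.exp 2 ≤ 8 := by
      rw [show (2 : ℝ) = ((2 : ℕ) : ℝ) * 1 by norm_num, Real.exp_nat_mul]
      calc _ ≤ (2.8 : ℝ) ^ 2 := by gcongr; linarith [Real.exp_one_lt_d9]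
        _ ≤ _ := by norm_num
    linarith [Real.one_lt_goldenRatio]
  rw [goldenRatio_pow_eq_exp, Real.exp_le_exp] at h2
  push_cast at h2
  linarith

theorem log_goldenRatio_le : Real.log Real.goldenRatio ≤ 7 / 10 := by
  have := Real.log_le_log Real.goldenRatio_pos Real.goldenRatio_lt_two.le
  linarith [Real.log_two_lt_d9]

theorem log_two_pow_mul_three_pow (x y : ℕ) :
    Real.log (2 ^ x * 3 ^ y) = x * Real.log 2 + y * Real.log 3 := by
  rw [Real.log_mul (by positivity) (by positivity), Real.log_pow, Real.log_pow]

theorem exponents_le {x y : ℕ} {R : ℝ} (h : (2 : ℝ) ^ x * 3 ^ y ≤ Real.exp R) :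
    (x : ℝ) ≤ 3 / 2 * R ∧ (y : ℝ) ≤ 3 / 2 * R := by
  have h1 := Real.log_le_log (by positivity) h
  rw [log_two_pow_mul_three_pow, Real.log_exp] at h1
  have h2 := Real.log_two_gt_d9
  have h3 : Real.log 2 ≤ Real.log 3 := Real.log_le_log (by norm_num) (by norm_num)
  have hx := Nat.cast_nonneg (α := ℝ) x
  have hy := Nat.cast_nonneg (α := ℝ) y
  constructor <;> nlinarith

theorem le_of_abs_linearForm_le {a b d : ℤ} (h0 : ¬(a = 0 ∧ b = 0 ∧ d = 0)) {h w : ℝ}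
    (hh : 35 ≤ h) (ha : |(a : ℝ)| ≤ Real.exp h) (hb : |(b : ℝ)| ≤ Real.exp h)
    (hd : |(d : ℝ)| ≤ Real.exp h)
    (hw : |a * Real.log 2 + b * Real.log 3 + d * Real.log Real.goldenRatio| ≤ 2 * Real.exp (-w)) :
    w ≤ 10 ^ 13 * h ^ 2 + 1 := by
  have h1 := exp_neg_le_abs_sum_mul_logs (b := ![a, b, d]) (fun h => h0
    ⟨congrFun h 0, congrFun h 1, congrFun h 2⟩) hh (fun i => by fin_cases i <;> assumption)
  rw [Fin.sum_univ_three] at h1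
  have h2 : (2 : ℝ) ≤ Real.exp 1 := by linarith [Real.exp_one_gt_d9]
  have h3 : Real.exp (-(10 ^ 13 * h ^ 2)) ≤ Real.exp (1 + -w) := by
    rw [Real.exp_add]
    exact h1.trans (hw.trans (by gcongr))
  linarith [Real.exp_le_exp.mp h3]

theorem abs_natCast_sub_natCast_le {a b : ℕ} {r : ℝ} (ha : (a : ℝ) ≤ r) (hb : (b : ℝ) ≤ r) :
    |(a : ℝ) - b| ≤ r := by
  have := Nat.cast_nonneg (α := ℝ) a
  have := Nat.cast_nonneg (α := ℝ) b
  rw [abs_le]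
  constructor <;> linarith

theorem mul_log_add_one_sq_lt {Z : ℝ} (hZ : Real.exp 39 ≤ Z) :
    10 ^ 13 * (Real.log Z + 1) ^ 2 + 1 < 3 / 10 * Z := by
  have hZ0 : 0 < Z := (Real.exp_pos _).trans_le hZ
  have hlog : 39 ≤ Real.log Z := (Real.le_log_iff_exp_le hZ0).mpr hZ
  set s := Real.log Z - 39 with hs
  have hs0 : 0 ≤ s := by linarith
  have h39 : (8 * 10 ^ 16 : ℝ) ≤ Real.exp 39 := by
    rw [show (39 : ℝ) = ((39 : ℕ) : ℝ) * 1 by norm_num, Real.exp_nat_mul]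
    calc (8 * 10 ^ 16 : ℝ) ≤ 2.718 ^ 39 := by norm_num
      _ ≤ _ := by gcongr; linarith [Real.exp_one_gt_d9]
  have hZs : 8 * 10 ^ 16 * (1 + s + s ^ 2 / 2) ≤ Z := by
    calc _ ≤ Real.exp 39 * Real.exp s := by
          gcongr; exact Real.quadratic_le_exp_of_nonneg hs0
      _ = Z := by rw [← Real.exp_add, hs, add_sub_cancel, Real.exp_log hZ0]
  rw [show Real.log Z = s + 39 by rw [hs]; ring]
  nlinarith [sq_nonneg s]

theorem exp_thirtyNine_le_of_mul_log_sq_le {n : ℕ} (hn : 501 < n)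
    (h : 8 * 10 ^ 13 * Real.log n ^ 2 ≤ n) : Real.exp 39 ≤ n := by
  have hn0 : (0 : ℝ) < n := by exact_mod_cast (by omega : 0 < n)
  have key : ∀ k : ℕ, ((2.72 : ℝ) ^ k ≤ n) → (k : ℝ) ≤ Real.log n := by
    intro k hk
    rw [Real.le_log_iff_exp_le hn0, ← mul_one (k : ℝ), Real.exp_nat_mul]
    refine le_trans ?_ hk
    gcongr
    linarith [Real.exp_one_lt_d9]
  have hn' : (502 : ℝ) ≤ n := by exact_mod_cast hn
  have h1 := key 6 (le_trans (by norm_num) hn')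
  have h2 := key 35 (le_trans (b := 8 * 10 ^ 13 * (6 : ℝ) ^ 2) (by norm_num) (le_trans (by
    gcongr; exact_mod_cast h1) h))
  have h3 := key 39 (le_trans (b := 8 * 10 ^ 13 * (35 : ℝ) ^ 2) (by norm_num) (le_trans (by
    gcongr; exact_mod_cast h2) h))
  exact (Real.le_log_iff_exp_le hn0).mp (by exact_mod_cast h3)

theorem two_mul_le_exp_log_add_one {z : ℝ} (hz : 0 < z) : 2 * z ≤ Real.exp (Real.log z + 1) := by
  rw [Real.exp_add, Real.exp_log hz, mul_comm]
  gcongr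
  linarith [Real.exp_one_gt_d9]

theorem three_le_exp_two : (3 : ℝ) ≤ Real.exp 2 := by linarith [Real.add_one_le_exp (2 : ℝ)]

theorem mul_sq_add_one_lt {l g : ℝ} (hl : 39 ≤ l) (hg : 2 / 5 ≤ g) :
    10 ^ 13 * (l + 1) ^ 2 + 1 < g * (4 * 10 ^ 13 * l ^ 2) := by
  have : 2 / 5 * (4 * 10 ^ 13 * l ^ 2) ≤ g * (4 * 10 ^ 13 * l ^ 2) := by gcongr
  nlinarith

theorem log_le_of_two_solutions {D : ℝ} (hD1 : 1 ≤ D) {n n₁ n₂ x₁ x₂ y₁ y₂ : ℕ}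
    (hA₁ : (2 : ℝ) ^ x₁ * 3 ^ y₁ = lucas n₁ + D) (hA₂ : (2 : ℝ) ^ x₂ * 3 ^ y₂ = lucas n₂ + D)
    (hnn : n₁ < n) (hnn' : n₂ < n₁) (hn₁ : 2 ≤ n₁) (hn39 : Real.exp 39 ≤ n) :
    Real.log D ≤ Real.log Real.goldenRatio * (n₁ + 4 * 10 ^ 13 * Real.log n ^ 2) := by
  set l := Real.log n with hl
  set g := Real.log Real.goldenRatio with hg
  set Z := Real.log D with hZ
  have hg1 : 2 / 5 ≤ g := two_fifths_le_log_goldenRatio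
  have hg2 : g ≤ 7 / 10 := log_goldenRatio_le
  have hn₁0 : (0 : ℝ) ≤ n₁ := Nat.cast_nonneg _
  have hn0 : (0 : ℝ) < n := (Real.exp_pos _).trans_le hn39
  have hl39 : 39 ≤ l := (Real.le_log_iff_exp_le hn0).mpr hn39
  have hmain := mul_sq_add_one_lt hl39 hg1
  have hDZ : D = Real.exp Z := (Real.exp_log (by linarith)).symm
  by_contra! hlt
  have hlt' : n₁ * g + g * (4 * 10 ^ 13 * l ^ 2) < Z := by linarith
  have hgl : 0 ≤ g * (4 * 10 ^ 13 * l ^ 2) := by positivity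
  have hφD : Real.goldenRatio ^ n₁ ≤ D := by
    rw [goldenRatio_pow_eq_exp, hDZ, Real.exp_le_exp]
    linarith
  have hlucas : (lucas n₁ : ℝ) ≤ 2 * Real.goldenRatio ^ n₁ := by
    rw [lucas_eq]
    linarith [(abs_le.mp (abs_goldenConj_pow_le_one n₁)).2,
      one_le_pow₀ Real.one_lt_goldenRatio.le (n := n₁)]
  have hpos₂ : (0 : ℝ) < lucas n₂ := by exact_mod_cast lucas_pos n₂
  have hlt₂ : (lucas n₂ : ℝ) < lucas n₁ := by exact_mod_cast lucas_lt_lucas hnn' (by omega)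
  have hA3 : lucas n₁ + D ≤ Real.exp (Z + 2) := by
    rw [Real.exp_add, ← hDZ]
    nlinarith [three_le_exp_two]
  obtain ⟨hx₁, hy₁⟩ := exponents_le (hA₁.trans_le hA3)
  obtain ⟨hx₂, hy₂⟩ := exponents_le (hA₂.trans_le (le_trans (by linarith) hA3))
  have hZ10 : 10 ≤ Z := by nlinarith
  have hlog : Real.log (2 ^ x₁ * 3 ^ y₁) - Real.log (2 ^ x₂ * 3 ^ y₂) =
      (x₁ - x₂) * Real.log 2 + (y₁ - y₂) * Real.log 3 := by
    rw [log_two_pow_mul_three_pow, log_two_pow_mul_three_pow]; ring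
  have hlog0 : 0 < Real.log (2 ^ x₁ * 3 ^ y₁) - Real.log (2 ^ x₂ * 3 ^ y₂) :=
    sub_pos.mpr (Real.log_lt_log (by positivity) (by rw [hA₁, hA₂]; linarith))
  have hlog1 : Real.log (2 ^ x₁ * 3 ^ y₁) - Real.log (2 ^ x₂ * 3 ^ y₂) ≤
      2 * Real.exp (-(Z - n₁ * g)) := by
    rw [hA₁, hA₂, ← Real.log_div (by linarith) (by linarith)]
    refine (Real.log_le_sub_one_of_pos (by apply div_pos <;> linarith)).trans ?_
    rw [neg_sub, Real.exp_sub, ← goldenRatio_pow_eq_exp, ← hDZ, ← mul_div_assoc,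
      div_sub_one (by linarith)]
    apply div_le_div₀ <;> linarith
  have hne : ¬((x₁ : ℤ) - x₂ = 0 ∧ (y₁ : ℤ) - y₂ = 0 ∧ (0 : ℤ) = 0) := by
    rintro ⟨hx, hy, -⟩
    rw [show x₁ = x₂ by omega, show y₁ = y₂ by omega, sub_self] at hlog0
    exact hlog0.false
  have hbound : ∀ m : ℝ, Z ≤ m → Real.exp 39 ≤ m →
      Z - n₁ * g ≤ 10 ^ 13 * (Real.log m + 1) ^ 2 + 1 := by
    intro m hm hm39
    have hm0 : 0 < m := by linarith
    have h2m : 3 / 2 * (Z + 2) ≤ Real.exp (Real.log m + 1) :=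
      le_trans (by linarith) (two_mul_le_exp_log_add_one hm0)
    refine le_of_abs_linearForm_le hne
      (by linarith [(Real.le_log_iff_exp_le hm0).mpr hm39]) ?_ ?_ ?_ ?_
    · push_cast
      exact (abs_natCast_sub_natCast_le hx₁ hx₂).trans h2m
    · push_cast
      exact (abs_natCast_sub_natCast_le hy₁ hy₂).trans h2m
    · rw [Int.cast_zero, abs_zero]
      exact (Real.exp_pos _).le
    · push_cast
      rw [zero_mul, add_zero, ← hlog, abs_of_pos hlog0]
      exact hlog1
  rcases le_or_gt Z n with hZn | hZn
  · linarith [hbound n hZn hn39]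
  · have hZ39 := hn39.trans hZn.le
    have h4 : (n₁ : ℝ) * g ≤ Z * (7 / 10) := by
      have : (n₁ : ℝ) ≤ n := by exact_mod_cast hnn.le
      gcongr
      linarith
    linarith [hbound Z le_rfl hZ39, mul_log_add_one_sq_lt hZ39]

theorem neg_c_gap_n_bound (c : ℤ) (hc : c < 0)
    (n n₁ n₂ x x₁ x₂ y y₁ y₂ : ℕ)
    (h1 : c = lucas n - 2 ^ x * 3 ^ y) (h2 : c = lucas n₁ - 2 ^ x₁ * 3 ^ y₁)
    (h3 : c = lucas n₂ - 2 ^ x₂ * 3 ^ y₂)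
    (hnn : n₁ < n) (hnn' : n₂ < n₁) (hn₁ : 500 < n₁) :
    (n : ℝ) - n₁ < 8 * 10 ^ 13 * Real.log n ^ 2 := by
  by_contra! hgap
  set l := Real.log n with hl
  set g := Real.log Real.goldenRatio with hg
  have hg1 : 2 / 5 ≤ g := two_fifths_le_log_goldenRatio
  have hg2 : g ≤ 7 / 10 := log_goldenRatio_le
  have hn₁0 : (0 : ℝ) ≤ n₁ := Nat.cast_nonneg _
  have hn39 : Real.exp 39 ≤ n :=
    exp_thirtyNine_le_of_mul_log_sq_le (by omega) (by rw [← hl]; linarith)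
  have hn0 : (0 : ℝ) < n := (Real.exp_pos _).trans_le hn39
  have hl39 : 39 ≤ l := (Real.le_log_iff_exp_le hn0).mpr hn39
  have hmain := mul_sq_add_one_lt hl39 hg1
  have hgl : 0 ≤ g * (4 * 10 ^ 13 * l ^ 2) := by positivity
  have hD1 : (1 : ℝ) ≤ -c := by exact_mod_cast (by omega : (1 : ℤ) ≤ -c)
  set D : ℝ := -c with hD
  have hA : (2 : ℝ) ^ x * 3 ^ y = lucas n + D := by
    rw [hD, h1]; push_cast; ring
  have hA₁ : (2 : ℝ) ^ x₁ * 3 ^ y₁ = lucas n₁ + D := by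
    rw [hD, h2]; push_cast; ring
  have hA₂ : (2 : ℝ) ^ x₂ * 3 ^ y₂ = lucas n₂ + D := by
    rw [hD, h3]; push_cast; ring
  set Z := Real.log D with hZ
  have hDZ : D = Real.exp Z := (Real.exp_log (by linarith)).symm
  have hZle : Z ≤ g * (n₁ + 4 * 10 ^ 13 * l ^ 2) :=
    log_le_of_two_solutions hD1 hA₁ hA₂ hnn hnn' (by omega) hn39
  have hDn : D ≤ Real.goldenRatio ^ n * Real.exp (-(g * (4 * 10 ^ 13 * l ^ 2))) := by
    rw [goldenRatio_pow_eq_exp, ← Real.exp_add, hDZ, Real.exp_le_exp]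
    nlinarith
  have hφ1 : 1 ≤ Real.goldenRatio ^ n := one_le_pow₀ Real.one_lt_goldenRatio.le
  have hφ0 : 0 < Real.goldenRatio ^ n := by linarith
  have hψ := abs_le.mp (abs_goldenConj_pow_le_one n)
  have hDφ : D ≤ Real.goldenRatio ^ n := by
    refine hDn.trans (mul_le_of_le_one_right (by linarith) (Real.exp_le_one_iff.mpr ?_))
    linarith
  obtain ⟨hx, hy⟩ := exponents_le (x := x) (y := y) (R := n * g + 2) (by
    rw [hA, lucas_eq, Real.exp_add, ← goldenRatio_pow_eq_exp]
    nlinarith [three_le_exp_two])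
  have hn10 : (10 : ℝ) ≤ n := by exact_mod_cast (by omega : 10 ≤ n)
  have h2n : 3 / 2 * (n * g + 2) ≤ Real.exp (l + 1) := by
    refine le_trans ?_ (two_mul_le_exp_log_add_one hn0)
    nlinarith
  have hA' : Real.log (2 ^ x * 3 ^ y) - n * g =
      Real.log (1 + (D + Real.goldenConj ^ n) / Real.goldenRatio ^ n) := by
    rw [hA, lucas_eq, one_add_div hφ0.ne', Real.log_div (by linarith) hφ0.ne', Real.log_pow,
      add_assoc, add_comm D]
  have hε0 : 0 ≤ (D + Real.goldenConj ^ n) / Real.goldenRatio ^ n :=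
    div_nonneg (by linarith) hφ0.le
  have hfinal := le_of_abs_linearForm_le (a := x) (b := y) (d := -n) (h := l + 1)
    (w := g * (4 * 10 ^ 13 * l ^ 2)) (fun h => by omega) (by linarith)
    (by push_cast; rw [Nat.abs_cast]; linarith) (by push_cast; rw [Nat.abs_cast]; linarith)
    (by push_cast; rw [abs_neg, Nat.abs_cast]; linarith [two_mul_le_exp_log_add_one hn0]) (by
      push_cast
      rw [← log_two_pow_mul_three_pow, neg_mul, ← sub_eq_add_neg, ← hg, hA',
        abs_of_nonneg (Real.log_nonneg (by linarith))]
      refine (Real.log_le_sub_one_of_pos (by linarith)).trans ?_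
      rw [add_sub_cancel_left, div_le_iff₀ hφ0]
      linarith)
  linarith
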